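/- arXiv:1807.11465 — 2 statements merged into one kernel-verified Lean document; each statement's English description precedes it below -/
import Mathlib

section
/- Signed Vizing's Theorem: For every signed simple graph Σ = (Γ, σ) on a finite simple graph Γ, the chromatic index satisfies Δ(Σ) ≤ χ'(Σ) ≤ Δ(Σ) + 1. -/
open SimpleGraph

/-- The signed color set `M_n`: for `n = 2k+1` it is `{0, ±1, …, ±k}`,
and for `n = 2k` it is `{±1, …, ±k}`. -/
def Mset (n : ℕ) : Set ℤ :=
  {a : ℤ | 2 * a.natAbs ≤ n ∧ (a = 0 → Odd n)}

/-- An `n`-edge coloring of the signed graph `(G, σ)`: an assignment of colors from `Mset n`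
to the incidences of `G` such that `γ(v,e) = -σ(e)·γ(w,e)` for each edge `e : vw`. -/
structure SColoring {V : Type*} (G : SimpleGraph V) (σ : Sym2 V → ℤ) (n : ℕ) where
  col : V → Sym2 V → ℤ
  mem_colors : ∀ ⦃v w : V⦄, G.Adj v w → col v s(v, w) ∈ Mset n
  compat : ∀ ⦃v w : V⦄, G.Adj v w → col v s(v, w) = -σ s(v, w) * col w s(v, w)

namespace SColoring

variable {V : Type*} {G : SimpleGraph V} {σ : Sym2 V → ℤ} {n : ℕ}

/-- A coloring is proper if distinct edges incident to a common vertex receive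
distinct colors at that vertex. -/
def Proper (c : SColoring G σ n) : Prop :=
  ∀ ⦃v w x : V⦄, G.Adj v w → G.Adj v x → w ≠ x → c.col v s(v, w) ≠ c.col v s(v, x)

/-- A coloring is zero-free if the color `0` is never used. -/
def ZeroFree (c : SColoring G σ n) : Prop :=
  ∀ ⦃v w : V⦄, G.Adj v w → c.col v s(v, w) ≠ 0

/-- The color `a` is absent at the vertex `v` if no edge incident to `v` is
colored `a` at `v`. -/
def Absent (c : SColoring G σ n) (a : ℤ) (v : V) : Prop :=
  ∀ ⦃w : V⦄, G.Adj v w → c.col v s(v, w) ≠ a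

end SColoring

/-!
It suffices to color with a set `C` of nonzero colors closed under negation a graph with degrees at
most `#C` in which no two vertices of degree `#C` are adjacent: if the maximum degree is even, the
edges of a maximal matching are colored `0` first. Remove a vertex `u` whose neighbours all have
degree less than `#C`, and color the rest by induction. Each neighbour of `u` then has at least two
colors available for its edge to `u`, and it remains to recolor the rest, one neighbour of `u` after
the other, until the sets of available colors have a system of distinct representatives.

The tool is a Kempe chain for two colors `a` and `b`, which is an orbit of incidences carrying `±a`
or `±b`. Suppose no sequence of flips of chains succeeds. Some color `a` is unused by the partial
system of representatives, hence dispensable. In a minimal violator `S` of Hall's condition, some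
color `b` is available at three or more vertices. Flipping the chains that start there has to fail,
so two of them end, at different vertices, with the same color, which is `-a` or `-b`, and by
submodularity the two tight sets that cause the failure cover `S`. If that color is `-a`, one flip
makes both `a` and `-a` dispensable. If it is `-b`, the chains for `a` and `-b` from these two ends
lead to the color `-a` again. Finally, `a` and `-a` cannot both be dispensable: the color would then
be `-b`, and the flip would restore Hall's condition.
-/

open Finset

/-! ### Minimal violators of Hall's condition -/

section Hall

variable {ι α : Type*} {M : ι → Finset α} {A B S : Finset ι} {a x y : α} {z : ι}

/-- A system of distinct representatives of the family of sets `M`. -/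
def HasTransversal (M : ι → Finset α) : Prop :=
  ∃ f : ι → α, Function.Injective f ∧ ∀ i, f i ∈ M i

/-- `z` is the only index in `A` whose set contains `x`. -/
structure IsSole (M : ι → Finset α) (A : Finset ι) (z : ι) (x : α) : Prop where
  mem : z ∈ A
  mem_set : x ∈ M z
  eq : ∀ v ∈ A, x ∈ M v → v = z

lemma IsSole.mono (h : IsSole M A z x) (hB : B ⊆ A) (hz : z ∈ B) : IsSole M B z x :=
  ⟨hz, h.mem_set, fun v hv => h.eq v (hB hv)⟩

variable [DecidableEq α]

lemma IsSole.mem_biUnion (h : IsSole M A z x) : x ∈ A.biUnion M :=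
  Finset.mem_biUnion.2 ⟨z, h.mem, h.mem_set⟩

lemma IsSole.mem_of_mem_biUnion (h : IsSole M A z x) (hB : B ⊆ A) (hx : x ∈ B.biUnion M) :
    z ∈ B := by
  obtain ⟨v, hv, hxv⟩ := Finset.mem_biUnion.1 hx
  exact h.eq v (hB hv) hxv ▸ hv

/-- A minimal violator `S` of Hall's condition for the family `M`. -/
structure IsCritical (M : ι → Finset α) (S : Finset ι) : Prop where
  card_lt : #(S.biUnion M) < #S
  card_le : ∀ A ⊂ S, #A ≤ #(A.biUnion M)

/-- The set `A` of indices leaves no slack in Hall's condition for the family `M`. -/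
def IsTight (M : ι → Finset α) (A : Finset ι) : Prop :=
  #(A.biUnion M) ≤ #A

/-- The color `a` is dispensable for `M`: once it is withdrawn, all sets of indices satisfy Hall's
condition up to a defect of `1`. -/
def IsFree (M : ι → Finset α) (a : α) : Prop :=
  ∀ A : Finset ι, #A ≤ #(A.biUnion M \ {a}) + 1

lemma card_sdiff_le_card_sdiff_insert_add_one (X D : Finset α) (a : α) :
    #(X \ D) ≤ #(X \ insert a D) + 1 := by
  have := pred_card_le_card_erase (s := X \ D) (a := a)
  rw [sdiff_insert]
  omega

lemma card_sdiff_singleton_add_one {X : Finset α} (h : a ∈ X) : #(X \ {a}) + 1 = #X := by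
  rw [sdiff_singleton_eq_erase, card_erase_add_one h]

lemma exists_isCritical [Finite ι] (hM : ¬ HasTransversal M) : ∃ S, IsCritical M S := by
  rw [HasTransversal, ← all_card_le_biUnion_card_iff_exists_injective] at hM
  push Not at hM
  obtain ⟨S, hS⟩ := (Set.toFinite {S : Finset ι | #(S.biUnion M) < #S}).exists_minimal hM
  exact ⟨S, hS.prop, fun A hA => not_lt.1 fun h => hA.not_subset (hS.le_of_le h hA.subset)⟩

lemma IsCritical.notMem_biUnion (hS : IsCritical M S) (ha : IsFree M a) : a ∉ S.biUnion M := by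
  intro h
  have := card_sdiff_singleton_add_one h
  have := ha S
  have := hS.card_lt
  omega

lemma IsCritical.exists_three_mem (hS : IsCritical M S) (hM : ∀ i, 2 ≤ #(M i)) :
    ∃ b, 2 < #{i ∈ S | b ∈ M i} := by
  by_contra! hle
  have hfilter : ∀ i ∈ S, {b ∈ S.biUnion M | b ∈ M i} = M i := fun i hi => by
    rw [filter_mem_eq_inter, inter_eq_right.2 (subset_biUnion_of_mem M hi)]
  have hcount := card_mul_le_card_mul (s := S) (t := S.biUnion M) (m := 2) (n := 2)
    (fun i b => b ∈ M i) (fun i hi => (hM i).trans_eq (congrArg card (hfilter i hi)).symm)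
    fun b _ => hle b
  have := hS.card_lt
  omega

section InterUnion

variable [DecidableEq ι]

lemma biUnion_inter_subset (M : ι → Finset α) (A B : Finset ι) :
    (A ∩ B).biUnion M ⊆ A.biUnion M ∩ B.biUnion M :=
  subset_inter (biUnion_subset_biUnion_of_subset_left _ inter_subset_left)
    (biUnion_subset_biUnion_of_subset_left _ inter_subset_right)

lemma card_biUnion_union_sdiff_add_card_inter_sdiff (M : ι → Finset α) (A B : Finset ι)
    (D : Finset α) :
    #((A ∪ B).biUnion M \ D) + #((A.biUnion M ∩ B.biUnion M) \ D) =
      #(A.biUnion M \ D) + #(B.biUnion M \ D) := by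
  rw [union_biUnion, union_sdiff_distrib, ← inf_eq_inter, inf_sdiff, inf_eq_inter,
    card_union_add_card_inter]

lemma IsSole.biUnion_erase_subset (h : IsSole M A z x) :
    (A.erase z).biUnion M ⊆ (A.biUnion M).erase x := by
  intro y hy
  refine mem_erase.2 ⟨?_, biUnion_subset_biUnion_of_subset_left _ (erase_subset z A) hy⟩
  rintro rfl
  exact notMem_erase z A (h.mem_of_mem_biUnion (erase_subset z A) hy)

end InterUnion

namespace IsCritical

lemma not_isSole (hS : IsCritical M S) : ¬ IsSole M S z x := by
  classical
  intro hz
  have := card_le_card hz.biUnion_erase_subset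
  have := hS.card_le _ (erase_ssubset hz.mem)
  have := card_erase_add_one hz.mem
  have := card_erase_add_one hz.mem_biUnion
  have := hS.card_lt
  omega

section InterUnion

variable [DecidableEq ι]

lemma inter_biUnion_eq (hS : IsCritical M S) (hA : IsTight M A) (hB : IsTight M B)
    (hAB : A ∪ B ⊂ S) : A.biUnion M ∩ B.biUnion M = (A ∩ B).biUnion M := by
  refine (eq_of_subset_of_card_le (biUnion_inter_subset M A B) ?_).symm
  have hcount := card_biUnion_union_sdiff_add_card_inter_sdiff M A B ∅
  simp only [sdiff_empty] at hcount
  have := hS.card_le _ hAB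
  have := hS.card_le _ ((inter_subset_union ..).trans_ssubset hAB)
  have := card_union_add_card_inter A B
  unfold IsTight at hA hB
  omega

lemma isTight_and_inter_biUnion_eq (hS : IsCritical M S) (ha : IsFree M a) (hA : IsTight M A)
    (hB : IsTight M B) (hAB : A ∪ B = S)
    (hx : x ∈ A.biUnion M ∩ B.biUnion M) (hx' : x ∉ (A ∩ B).biUnion M) :
    IsTight M (A ∩ B) ∧ A.biUnion M ∩ B.biUnion M = insert x ((A ∩ B).biUnion M) := by
  have hsub : insert x ((A ∩ B).biUnion M) ⊆ A.biUnion M ∩ B.biUnion M :=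
    insert_subset hx (biUnion_inter_subset M A B)
  have hne : A ∩ B ≠ S := by
    intro h
    obtain rfl := inf_eq_sup.1 (h.trans hAB.symm)
    simp only [inter_self] at hx hx'
    exact hx' hx
  have hcount := card_biUnion_union_sdiff_add_card_inter_sdiff M A B ∅
  have hge := hS.card_le _ ((hAB ▸ inter_subset_union).ssubset_of_ne hne)
  have hle := card_le_card hsub
  have hinsert := card_insert_of_notMem hx'
  have := ha S
  have := card_le_card (sdiff_subset : S.biUnion M \ {a} ⊆ S.biUnion M)
  have := card_union_add_card_inter A B
  simp only [sdiff_empty, hAB] at *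
  unfold IsTight at *
  exact ⟨by omega, (eq_of_subset_of_card_le hsub (by omega)).symm⟩

lemma card_inter_add_card_le (hS : IsCritical M S) (ha : IsFree M a) (A : Finset ι) :
    #(A.biUnion M ∩ S.biUnion M) + #A ≤ #(A.biUnion M \ {a}) + #(A ∩ S) := by
  have hcount := card_biUnion_union_sdiff_add_card_inter_sdiff M A S {a}
  have haS := hS.notMem_biUnion ha
  rw [sdiff_singleton_eq_erase a (_ ∩ _), erase_eq_of_notMem fun h => haS (mem_inter.1 h).2,
    sdiff_singleton_eq_erase a (S.biUnion M), erase_eq_of_notMem haS] at hcount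
  have := ha (A ∪ S)
  have := hS.card_lt
  have := card_union_add_card_inter A S
  omega

lemma isTight_inter (hS : IsCritical M S) (ha : IsFree M a) (hA : #(A.biUnion M \ {a}) ≤ #A) :
    IsTight M (A ∩ S) := by
  have := card_le_card (biUnion_inter_subset M A S)
  have := hS.card_inter_add_card_le ha A
  unfold IsTight
  omega

lemma biUnion_inter_eq (hS : IsCritical M S) (ha : IsFree M a) (hSA : ¬ S ⊆ A)
    (hA : #(A.biUnion M \ {a}) ≤ #A) : (A ∩ S).biUnion M = A.biUnion M ∩ S.biUnion M := by
  refine eq_of_subset_of_card_le (biUnion_inter_subset M A S) ?_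
  have := hS.card_inter_add_card_le ha A
  have := hS.card_le (A ∩ S) (inter_subset_right.ssubset_of_ne fun e => hSA (inter_eq_right.1 e))
  omega

end InterUnion

lemma subset_of_card_lt (hS : IsCritical M S) (ha : IsFree M a)
    (hA : #(A.biUnion M \ {a}) < #A) : S ⊆ A := by
  classical
  by_contra h
  have := hS.card_le (A ∩ S) (inter_subset_right.ssubset_of_ne fun e => h (inter_eq_right.1 e))
  have := card_le_card (biUnion_inter_subset M A S)
  have := hS.card_inter_add_card_le ha A
  omega

end IsCritical

end Hall

/-! ### Families of color sets under Kempe flips -/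

section Flips

/-- The involution of `ℤ` exchanging `a` with `b` and `-a` with `-b`. -/
def signedSwap (a b x : ℤ) : ℤ :=
  if x = a then b else if x = b then a else if x = -a then -b else if x = -b then -a else x

variable {ι : Type*} {M M' : ι → Finset ℤ} {A B S : Finset ι} {a b c x y : ℤ} {u w z : ι}
  {p q : ι × ℤ}

/-- `M'` keeps every color of `M`, except that the two incidences `p` and `q` (the ends of a Kempe
chain) have their colors exchanged by `signedSwap a c`. New colors may appear freely. -/
def IsFlip (M M' : ι → Finset ℤ) (a c : ℤ) (p q : ι × ℤ) : Prop :=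
  ∀ v, ∀ x ∈ M v, (((v, x) = p ∨ (v, x) = q) → signedSwap a c x ∈ M' v) ∧
    ((v, x) ≠ p → (v, x) ≠ q → x ∈ M' v)

lemma signedSwap_right (a c : ℤ) : signedSwap a c c = a := by
  unfold signedSwap; split_ifs <;> omega

namespace IsFlip

lemma mem_biUnion_left (h : IsFlip M M' a c (w, c) q) (hc : c ∈ M w) (hw : w ∈ A) :
    a ∈ A.biUnion M' :=
  Finset.mem_biUnion.2 ⟨w, hw, signedSwap_right a c ▸ (h w c hc).1 (Or.inl rfl)⟩

lemma mem_biUnion_right (h : IsFlip M M' a c p (z, x)) (hx : x ∈ M z) (hz : z ∈ A) :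
    signedSwap a c x ∈ A.biUnion M' :=
  Finset.mem_biUnion.2 ⟨z, hz, (h z x hx).1 (Or.inr rfl)⟩

lemma isSole_of_notMem (h : IsFlip M M' a c p q) (hu : ∀ v ≠ u, (v, y) ≠ p ∧ (v, y) ≠ q)
    (hy : y ∈ A.biUnion M) (hy' : y ∉ A.biUnion M') : IsSole M A u y := by
  have heq : ∀ v ∈ A, y ∈ M v → v = u := fun v hv hyv => by
    by_contra hne
    exact hy' (Finset.mem_biUnion.2 ⟨v, hv, (h v y hyv).2 (hu v hne).1 (hu v hne).2⟩)
  obtain ⟨v, hv, hyv⟩ := Finset.mem_biUnion.1 hy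
  obtain rfl := heq v hv hyv
  exact ⟨hv, hyv, heq⟩

lemma mem_biUnion_of_ne (h : IsFlip M M' a c (w, c) (z, x)) (hy : y ∈ A.biUnion M)
    (hyc : y ≠ c) (hyx : y ≠ x) : y ∈ A.biUnion M' := by
  obtain ⟨v, hv, hyv⟩ := Finset.mem_biUnion.1 hy
  exact Finset.mem_biUnion.2 ⟨v, hv, (h v y hyv).2 (by simp [hyc]) (by simp [hyx])⟩

lemma card_sdiff_pair_add_one (h : IsFlip M M' a c (w, c) q) (hc : c ∈ M w) (hw : w ∈ A)
    (hxa : x ≠ a) : #(A.biUnion M' \ {a, x}) + 1 = #(A.biUnion M' \ {x}) := by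
  rw [sdiff_insert]
  exact card_erase_add_one (mem_sdiff.2 ⟨h.mem_biUnion_left hc hw, by simpa using hxa.symm⟩)

open Classical in
lemma card_sdiff_le (h : IsFlip M M' a c (w, c) (z, x)) (A : Finset ι) {D : Finset ℤ}
    (hD : x = c → c ∈ D) : #(A.biUnion M \ D) ≤ #(A.biUnion M' \ D) +
      (if c ∉ D ∧ IsSole M A w c then 1 else 0) + if x ∉ D ∧ IsSole M A z x then 1 else 0 := by
  have hsub : A.biUnion M \ D ⊆ (A.biUnion M' \ D) ∪
      (if c ∉ D ∧ IsSole M A w c then {c} else ∅) ∪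
        if x ∉ D ∧ IsSole M A z x then {x} else ∅ := by
    intro y hy
    obtain ⟨hyM, hyD⟩ := mem_sdiff.1 hy
    by_contra hcon
    rw [mem_union, mem_union, mem_sdiff] at hcon
    push Not at hcon
    obtain ⟨⟨hM', hc⟩, hx⟩ := hcon
    have hyM' : y ∉ A.biUnion M' := fun h' => hyD (hM' h')
    by_cases hyc : y = c
    · subst hyc
      have hyx : y ≠ x := fun e => hyD (hD e.symm)
      rw [if_pos ⟨hyD, h.isSole_of_notMem (by simp +contextual [hyx]) hyM hyM'⟩] at hc
      exact hc (mem_singleton_self y)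
    by_cases hyx : y = x
    · subst hyx
      rw [if_pos ⟨hyD, h.isSole_of_notMem (by simp +contextual [hyc]) hyM hyM'⟩] at hx
      exact hx (mem_singleton_self y)
    exact hyM' (h.mem_biUnion_of_ne hyM hyc hyx)
  refine (card_le_card hsub).trans ((card_union_le ..).trans (Nat.add_le_add
    ((card_union_le ..).trans (Nat.add_le_add_left ?_ _)) ?_)) <;>
  split_ifs <;> simp

end IsFlip

section Blocking

/-- The index `z` is the only one with the color `x` in some set which violates Hall's condition
once the color `a` is withdrawn. -/
def IsOuterBlocked (M : ι → Finset ℤ) (a : ℤ) (z : ι) (x : ℤ) : Prop :=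
  ∃ A, #(A.biUnion M \ {a}) < #A ∧ IsSole M A z x

/-- The index `z` is the only one with the color `x` in some tight subset of `S` avoiding `w`. -/
def IsInnerBlocked (M : ι → Finset ℤ) (S : Finset ι) (w z : ι) (x : ℤ) : Prop :=
  ∃ A ⊆ S, w ∉ A ∧ IsTight M A ∧ IsSole M A z x

/-- The obstruction to a transversal that `S` leaves behind when the color `c` of the index `w` is
recolored to `a`, where `c ≠ x` and `x` is the color of `z` at the other end of the Kempe chain. -/
def IsBlocked (M : ι → Finset ℤ) (S : Finset ι) (a : ℤ) (w z : ι) (x : ℤ) : Prop :=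
  x ∉ S.biUnion M ∧ IsOuterBlocked M a z x ∨ x ∈ S.biUnion M ∧ IsInnerBlocked M S w z x

namespace IsCritical

lemma isOuterBlocked (hS : IsCritical M S) (ha : IsFree M a) (hSA : ¬ S ⊆ A)
    (hA : #(A.biUnion M \ {a}) ≤ #A) (hz : IsSole M A z x) (hx : x ∉ S.biUnion M) :
    IsOuterBlocked M a z x := by
  classical
  have hcount := card_biUnion_union_sdiff_add_card_inter_sdiff M A S {a}
  have hinter := card_le_card (sdiff_subset_sdiff (biUnion_inter_subset M A S) (Subset.refl {a}))
  have haS := hS.notMem_biUnion ha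
  rw [sdiff_singleton_eq_erase a ((A ∩ S).biUnion M), erase_eq_of_notMem fun h =>
    haS (mem_inter.1 (biUnion_inter_subset M A S h)).2] at hinter
  have := hS.card_le (A ∩ S) (inter_subset_right.ssubset_of_ne fun e => hSA (inter_eq_right.1 e))
  have := card_le_card (sdiff_subset : S.biUnion M \ {a} ⊆ S.biUnion M)
  have := hS.card_lt
  have := card_union_add_card_inter A S
  refine ⟨A ∪ S, by omega, mem_union_left S hz.mem, hz.mem_set,
    fun v hv hxv => (mem_union.1 hv).elim (fun hvA => hz.eq v hvA hxv) fun hvS => ?_⟩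
  exact absurd (Finset.mem_biUnion.2 ⟨v, hvS, hxv⟩) hx

lemma isInnerBlocked (hS : IsCritical M S) (ha : IsFree M a) (hSA : ¬ S ⊆ A)
    (hA : #(A.biUnion M \ {a}) ≤ #A) (hw : w ∈ A → IsSole M A w c) (hxc : x ≠ c)
    (hz : IsSole M A z x) (hx : x ∈ S.biUnion M) : IsInnerBlocked M S w z x := by
  classical
  have hTS : A ∩ S ⊂ S := inter_subset_right.ssubset_of_ne fun e => hSA (inter_eq_right.1 e)
  have htight : #((A ∩ S).biUnion M) ≤ #(A ∩ S) := hS.isTight_inter ha hA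
  have heq := hS.biUnion_inter_eq ha hSA hA
  have hzT : IsSole M (A ∩ S) z x := hz.mono inter_subset_left <|
    hz.mem_of_mem_biUnion inter_subset_left (heq ▸ mem_inter.2 ⟨hz.mem_biUnion, hx⟩)
  by_cases hwT : w ∈ A ∩ S
  · have hwT' : IsSole M (A ∩ S) w c := (hw (mem_inter.1 hwT).1).mono inter_subset_left hwT
    have hcard := card_erase_add_one hwT
    have hcard_c := card_erase_add_one hwT'.mem_biUnion
    have hzw : z ≠ w := by
      rintro rfl
      have hsub : ((A ∩ S).erase z).biUnion M ⊆ (((A ∩ S).biUnion M).erase c).erase x :=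
        fun y hy => mem_erase.2 ⟨(mem_erase.1 (hzT.biUnion_erase_subset hy)).1,
          hwT'.biUnion_erase_subset hy⟩
      have := card_le_card hsub
      have := card_erase_add_one (mem_erase.2 ⟨hxc, hzT.mem_biUnion⟩)
      have := hS.card_le _ ((erase_ssubset hwT).trans hTS)
      omega
    refine ⟨(A ∩ S).erase w, (erase_subset _ _).trans hTS.subset, notMem_erase _ _, ?_,
      hzT.mono (erase_subset _ _) (mem_erase.2 ⟨hzw, hzT.mem⟩)⟩
    have := card_le_card hwT'.biUnion_erase_subset
    unfold IsTight
    omega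
  · exact ⟨A ∩ S, hTS.subset, hwT, htight, hzT⟩

lemma ne_and_isBlocked (hS : IsCritical M S) (ha : IsFree M a) (hw : w ∈ S)
    (hc : c ∈ M w) (h : IsFlip M M' a c (w, c) (z, x)) (hxc : x ≠ c)
    (hA : #(A.biUnion M') < #A) : x ≠ a ∧ IsBlocked M S a w z x := by
  classical
  have hcard := h.card_sdiff_le A (D := {a}) fun e => absurd e hxc
  have hgain : w ∈ A → #(A.biUnion M' \ {a}) + 1 = #(A.biUnion M') := fun hwA =>
    card_sdiff_singleton_add_one (h.mem_biUnion_left hc hwA)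
  have := card_le_card (sdiff_subset : A.biUnion M' \ {a} ⊆ A.biUnion M')
  have hSA : #(A.biUnion M \ {a}) < #A → S ⊆ A := hS.subset_of_card_lt ha
  have hfree := ha A
  obtain ⟨hxa, hz⟩ : x ∉ ({a} : Finset ℤ) ∧ IsSole M A z x := by
    by_contra hzx
    rw [if_neg hzx] at hcard
    split_ifs at hcard with hwc
    · have := hgain hwc.2.mem
      exact hS.not_isSole (hwc.2.mono (hSA (by omega)) hw)
    · by_cases hwA : w ∈ A
      · have := hgain hwA
        omega
      · exact hwA (hSA (by omega) hw)
  rw [if_pos (c := x ∉ ({a} : Finset ℤ) ∧ _) ⟨hxa, hz⟩] at hcard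
  refine ⟨fun h => hxa (mem_singleton.2 h), ?_⟩
  by_cases hSA' : S ⊆ A
  · have := hgain (hSA' hw)
    rw [if_neg fun h => hS.not_isSole (h.2.mono hSA' hw)] at hcard
    exact Or.inl ⟨fun hx => hS.not_isSole (hz.mono hSA' (hz.mem_of_mem_biUnion hSA' hx)),
      A, by omega, hz⟩
  have hwc : w ∈ A → IsSole M A w c := fun hwA => by
    have := hgain hwA
    by_contra hwc
    rw [if_neg fun h => hwc h.2] at hcard
    exact hSA' (hSA (by omega))
  have hle : #(A.biUnion M \ {a}) ≤ #A := by
    split_ifs at hcard with hwc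
    · have := hgain hwc.2.mem
      omega
    · omega
  by_cases hx : x ∈ S.biUnion M
  · exact Or.inr ⟨hx, hS.isInnerBlocked ha hSA' hle hwc hxc hz hx⟩
  · exact Or.inl ⟨hx, hS.isOuterBlocked ha hSA' hle hz hx⟩

end IsCritical

/-- Two indices `w₁` and `w₂` with the color `c` that are blocked inside `S` by two different
indices `z₁` and `z₂` with the same color `x`; `A₁` and `A₂` witness this. -/
structure IsCrossing [DecidableEq ι] (M : ι → Finset ℤ) (S : Finset ι) (c x : ℤ) (w₁ w₂ z₁ z₂ : ι)
    (A₁ A₂ : Finset ι) : Prop where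
  ne : x ≠ c
  union_eq : A₁ ∪ A₂ = S
  notMem_left : w₁ ∉ A₁
  notMem_right : w₂ ∉ A₂
  mem_left : w₁ ∈ A₂
  mem_right : w₂ ∈ A₁
  color_mem_left : c ∈ M w₁
  color_mem_right : c ∈ M w₂
  isTight_left : IsTight M A₁
  isTight_right : IsTight M A₂
  isSole_left : IsSole M A₁ z₁ x
  isSole_right : IsSole M A₂ z₂ x
  notMem_biUnion : x ∉ (A₁ ∩ A₂).biUnion M

namespace IsCrossing

variable [DecidableEq ι] {w₁ w₂ z₁ z₂ : ι} {A₁ A₂ : Finset ι}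

lemma symm (h : IsCrossing M S c x w₁ w₂ z₁ z₂ A₁ A₂) :
    IsCrossing M S c x w₂ w₁ z₂ z₁ A₂ A₁ :=
  ⟨h.ne, union_comm A₁ A₂ ▸ h.union_eq, h.notMem_right, h.notMem_left, h.mem_right, h.mem_left,
    h.color_mem_right, h.color_mem_left, h.isTight_right, h.isTight_left, h.isSole_right,
    h.isSole_left, inter_comm A₁ A₂ ▸ h.notMem_biUnion⟩

lemma subset_left (h : IsCrossing M S c x w₁ w₂ z₁ z₂ A₁ A₂) : A₁ ⊆ S :=
  h.union_eq ▸ subset_union_left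

lemma subset_right (h : IsCrossing M S c x w₁ w₂ z₁ z₂ A₁ A₂) : A₂ ⊆ S :=
  h.symm.subset_left

lemma left_mem (h : IsCrossing M S c x w₁ w₂ z₁ z₂ A₁ A₂) : w₁ ∈ S :=
  h.subset_right h.mem_left

lemma blocker_mem (h : IsCrossing M S c x w₁ w₂ z₁ z₂ A₁ A₂) : z₁ ∈ S :=
  h.subset_left h.isSole_left.mem

lemma color_mem_biUnion (h : IsCrossing M S c x w₁ w₂ z₁ z₂ A₁ A₂) : c ∈ S.biUnion M :=
  Finset.mem_biUnion.2 ⟨w₁, h.left_mem, h.color_mem_left⟩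

lemma blocker_color_mem_biUnion (h : IsCrossing M S c x w₁ w₂ z₁ z₂ A₁ A₂) : x ∈ S.biUnion M :=
  Finset.mem_biUnion.2 ⟨z₁, h.blocker_mem, h.isSole_left.mem_set⟩

lemma blocker_notMem (h : IsCrossing M S c x w₁ w₂ z₁ z₂ A₁ A₂) : z₁ ∉ A₂ := fun hz =>
  h.notMem_biUnion <| Finset.mem_biUnion.2
    ⟨z₁, mem_inter.2 ⟨h.isSole_left.mem, hz⟩, h.isSole_left.mem_set⟩

lemma not_isSole (hS : IsCritical M S) (ha : IsFree M a)
    (h : IsCrossing M S c x w₁ w₂ z₁ z₂ A₁ A₂) (hA : #(A.biUnion M \ {a}) ≤ #A)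
    (hw : IsSole M A w₁ c) : ¬ IsSole M A z₁ x := by
  intro hz
  have hzT : z₁ ∈ A ∩ S := mem_inter.2 ⟨hz.mem, h.blocker_mem⟩
  have hxT : x ∉ ((A ∩ S) ∩ A₂).biUnion M := fun hx => h.blocker_notMem
    (mem_inter.1 (hz.mem_of_mem_biUnion (inter_subset_left.trans inter_subset_left) hx)).2
  have hunion : (A ∩ S) ∪ A₂ = S := by
    by_contra hne
    have hsub : A ∩ S ∪ A₂ ⊆ S := union_subset inter_subset_right h.subset_right
    rw [← hS.inter_biUnion_eq (hS.isTight_inter ha hA) h.isTight_right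
      (hsub.ssubset_of_ne hne)] at hxT
    exact hxT (mem_inter.2 ⟨Finset.mem_biUnion.2 ⟨z₁, hzT, hz.mem_set⟩,
      h.isSole_right.mem_biUnion⟩)
  have hw₂ : w₂ ∈ A ∩ S :=
    (mem_union.1 (hunion.symm.subset h.symm.left_mem)).resolve_right h.notMem_right
  have := hw.eq w₂ (mem_inter.1 hw₂).1 h.color_mem_right
  exact h.notMem_right (this ▸ h.mem_left)

end IsCrossing

namespace IsCritical

variable {w₁ w₂ z₁ z₂ : ι}

lemma exists_isCrossing [DecidableEq ι] (hS : IsCritical M S) (ha : IsFree M a)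
    (hxa : x ≠ a) (hxc : x ≠ c)
    (hw₁ : w₁ ∈ S) (hw₂ : w₂ ∈ S) (hc₁ : c ∈ M w₁) (hc₂ : c ∈ M w₂) (hz : z₁ ≠ z₂)
    (h₁ : IsBlocked M S a w₁ z₁ x) (h₂ : IsBlocked M S a w₂ z₂ x) :
    ∃ A₁ A₂, IsCrossing M S c x w₁ w₂ z₁ z₂ A₁ A₂ := by
  have hnotMem {A B : Finset ι} (hA : IsSole M A z₁ x) (hB : IsSole M B z₂ x) :
      x ∉ (A ∩ B).biUnion M := fun hx => by
    obtain ⟨v, hv, hxv⟩ := Finset.mem_biUnion.1 hx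
    exact hz ((hA.eq v (mem_inter.1 hv).1 hxv).symm.trans (hB.eq v (mem_inter.1 hv).2 hxv))
  rcases h₁ with ⟨hxS, A, hA, hzA⟩ | ⟨hxS, A, hAS, hwA, hA, hzA⟩ <;>
    rcases h₂ with ⟨hxS', B, hB, hzB⟩ | ⟨hxS', B, hBS, hwB, hB, hzB⟩
  · have hcount := card_biUnion_union_sdiff_add_card_inter_sdiff M A B {a}
    have hsub : insert x ((A ∩ B).biUnion M \ {a}) ⊆ (A.biUnion M ∩ B.biUnion M) \ {a} :=
      insert_subset (by simp [hzA.mem_biUnion, hzB.mem_biUnion, hxa])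
        (sdiff_subset_sdiff (biUnion_inter_subset M A B) Subset.rfl)
    have hcard := card_le_card hsub
    rw [card_insert_of_notMem fun h => hnotMem hzA hzB (mem_sdiff.1 h).1] at hcard
    have := ha (A ∪ B)
    have := ha (A ∩ B)
    have := card_union_add_card_inter A B
    omega
  · exact absurd hxS' hxS
  · exact absurd hxS hxS'
  · have hunion : A ∪ B = S := by
      by_contra hne
      have hx := hnotMem hzA hzB
      rw [← hS.inter_biUnion_eq hA hB ((union_subset hAS hBS).ssubset_of_ne hne)] at hx
      exact hx (mem_inter.2 ⟨hzA.mem_biUnion, hzB.mem_biUnion⟩)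
    exact ⟨A, B, hxc, hunion, hwA, hwB, (mem_union.1 (hunion ▸ hw₁)).resolve_left hwA,
      (mem_union.1 (hunion ▸ hw₂)).resolve_right hwB, hc₁, hc₂, hA, hB, hzA, hzB, hnotMem hzA hzB⟩

end IsCritical

namespace IsFlip

lemma card_sdiff_singleton_le (h : IsFlip M M' a c (w, c) (z, c)) (A : Finset ι) :
    #(A.biUnion M \ {a}) ≤ #(A.biUnion M') := by
  classical
  by_cases hc : c ∈ A.biUnion M → c ∈ A.biUnion M'
  · refine card_le_card fun y hy => ?_
    have hyM := (mem_sdiff.1 hy).1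
    by_cases hyc : y = c
    · exact hyc ▸ hc (hyc ▸ hyM)
    · exact h.mem_biUnion_of_ne hyM hyc hyc
  · push Not at hc
    obtain ⟨v, hv, hcv⟩ := Finset.mem_biUnion.1 hc.1
    have hend : (v, c) = (w, c) ∨ (v, c) = (z, c) := by
      by_contra! hne
      exact hc.2 (Finset.mem_biUnion.2 ⟨v, hv, (h v c hcv).2 hne.1 hne.2⟩)
    have ha : a ∈ A.biUnion M' :=
      Finset.mem_biUnion.2 ⟨v, hv, signedSwap_right a c ▸ (h v c hcv).1 hend⟩
    have hsub : (A.biUnion M \ {a}).erase c ⊆ A.biUnion M' \ {a} := fun y hy => by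
      simp only [mem_erase, mem_sdiff] at hy ⊢
      exact ⟨h.mem_biUnion_of_ne hy.2.1 hy.1 hy.1, hy.2.2⟩
    have := card_le_card hsub
    have := pred_card_le_card_erase (s := A.biUnion M \ {a}) (a := c)
    have := card_sdiff_singleton_add_one ha
    omega

lemma eq_or_eq_of_card_lt (hS : IsCritical M S) (ha : IsFree M a) (hw : w ∈ S) (hc : c ∈ M w)
    (h : IsFlip M M' a c (w, c) (z, c)) (hA : #(A.biUnion M') < #A) :
    ∀ v ∈ S, c ∈ M v → v = w ∨ v = z := by
  classical
  intro v hv hcv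
  by_contra! hne
  have hSA : S ⊆ A := hS.subset_of_card_lt ha ((h.card_sdiff_singleton_le A).trans_lt hA)
  have hcA : c ∈ A.biUnion M' := Finset.mem_biUnion.2
    ⟨v, hSA hv, (h v c hcv).2 (by simp [hne.1]) (by simp [hne.2])⟩
  have hsub : A.biUnion M \ {a} ⊆ A.biUnion M' \ {a} :=
    sdiff_subset_sdiff (fun y hy => if hyc : y = c then hyc ▸ hcA else
      h.mem_biUnion_of_ne hy hyc hyc) Subset.rfl
  have := card_le_card hsub
  have := card_sdiff_singleton_add_one (h.mem_biUnion_left hc (hSA hw))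
  have := ha A
  omega

lemma isFree_right (hS : IsCritical M S) (ha : IsFree M a) (hw : w ∈ S) (hc : c ∈ M w)
    (h : IsFlip M M' a c (w, c) (z, x)) (hxa : x ≠ a) : IsFree M' x := by
  classical
  intro A
  by_contra! hA
  have hloss := h.card_sdiff_le A (D := {a, x}) fun e => by simp [e]
  rw [if_neg (c := x ∉ _ ∧ _) (by simp)] at hloss
  have := card_sdiff_le_card_sdiff_insert_add_one (A.biUnion M) {x} a
  have hSA : #(A.biUnion M \ {a}) < #A → S ⊆ A := hS.subset_of_card_lt ha
  have hle := card_sdiff_le_card_sdiff_insert_add_one (A.biUnion M) {a} x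
  rw [pair_comm] at hle
  by_cases hwA : w ∈ A
  · have hgain := h.card_sdiff_pair_add_one hc hwA hxa
    have := ha A
    split_ifs at hloss with hcA
    · exact hS.not_isSole (hcA.2.mono (hSA (by omega)) hw)
    · omega
  · rw [if_neg fun hcA => hwA hcA.2.mem] at hloss
    have := card_le_card (sdiff_subset_sdiff (Subset.refl (A.biUnion M'))
      (by simp : ({x} : Finset ℤ) ⊆ {a, x}))
    exact hwA (hSA (by omega) hw)

end IsFlip

namespace IsCrossing

variable [DecidableEq ι] {w₁ w₂ z₁ z₂ : ι} {A₁ A₂ : Finset ι}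

lemma isFree_left (hS : IsCritical M S) (ha : IsFree M a)
    (h : IsCrossing M S c x w₁ w₂ z₁ z₂ A₁ A₂) (hM' : IsFlip M M' a c (w₁, c) (z₁, x)) :
    IsFree M' a := by
  intro A
  by_contra! hA
  have hloss := hM'.card_sdiff_le A (D := {a}) fun e => absurd e h.ne
  have hfree := ha A
  have hle : #(A.biUnion M \ {a}) ≤ #A := by split_ifs at hloss <;> omega
  have hSA : #(A.biUnion M \ {a}) < #A → S ⊆ A := hS.subset_of_card_lt ha
  split_ifs at hloss with hw hz hz
  · exact h.not_isSole hS ha hle hw.2 hz.2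
  · exact hS.not_isSole (hw.2.mono (hSA (by omega)) h.left_mem)
  · exact hS.not_isSole (hz.2.mono (hSA (by omega)) h.blocker_mem)
  · omega

lemma card_le_card_biUnion (hS : IsCritical M S) (ha : IsFree M a) (hna : IsFree M (-a))
    (h : IsCrossing M S c (-c) w₁ w₂ z₁ z₂ A₁ A₂)
    (hM' : IsFlip M M' a c (w₁, c) (z₁, -c)) (A : Finset ι) : #A ≤ #(A.biUnion M') := by
  by_contra! hA
  have hSA : S ⊆ A → w₁ ∈ A := fun hSA => hSA h.left_mem
  have hwA : w₁ ∉ A := fun hwA => by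
    have := h.isFree_left hS ha hM' A
    have := card_sdiff_singleton_add_one (hM'.mem_biUnion_left h.color_mem_left hwA)
    omega
  have hloss (y : ℤ) := hM'.card_sdiff_le A (D := {y}) fun e => absurd e h.ne
  simp only [if_neg fun hw : c ∉ _ ∧ IsSole M A w₁ c => hwA hw.2.mem] at hloss
  by_cases hzA : z₁ ∈ A
  · have hswap : signedSwap a c (-c) = -a := by
      have := h.ne
      unfold signedSwap; split_ifs <;> omega
    have hgain := card_sdiff_singleton_add_one
      (hswap ▸ hM'.mem_biUnion_right h.isSole_left.mem_set hzA)
    have := hloss (-a)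
    refine hwA (hSA (hS.subset_of_card_lt hna ?_))
    split_ifs at this <;> omega
  · have := hloss a
    have := card_le_card (sdiff_subset : A.biUnion M' \ {a} ⊆ A.biUnion M')
    rw [if_neg fun hz => hzA hz.2.mem] at *
    exact hwA (hSA (hS.subset_of_card_lt ha (by omega)))

lemma biUnion_inter_subset (hS : IsCritical M S) (h : IsCrossing M S c x w₁ w₂ z₁ z₂ A₁ A₂)
    (hB : B ⊆ S) (hBt : IsTight M B) (hw : w₁ ∉ B) :
    A₁.biUnion M ∩ B.biUnion M ⊆ (A₁ ∩ B).biUnion M := by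
  refine (hS.inter_biUnion_eq h.isTight_left hBt ?_).subset
  refine (union_subset h.subset_left hB).ssubset_of_ne fun he => ?_
  exact (mem_union.1 (he.symm.subset h.left_mem)).elim h.notMem_left hw

lemma blocker_mem_of_isSole (hS : IsCritical M S) (ha : IsFree M a)
    (h : IsCrossing M S c x w₁ w₂ z₁ z₂ A₁ A₂) (hB : B ⊆ S) (hBt : IsTight M B) (hz₁ : z₁ ∉ B)
    (hz : IsSole M B z c) : z ∈ A₁ := by
  have hx : x ∈ A₁.biUnion M ∩ A₂.biUnion M :=
    mem_inter.2 ⟨h.isSole_left.mem_biUnion, h.isSole_right.mem_biUnion⟩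
  obtain ⟨hR, hinter⟩ := hS.isTight_and_inter_biUnion_eq ha h.isTight_left h.isTight_right
    h.union_eq hx h.notMem_biUnion
  have hcR : c ∈ (A₁ ∩ A₂).biUnion M := by
    refine (mem_insert.1 (hinter ▸ mem_inter.2 ⟨?_, ?_⟩)).resolve_left h.ne.symm
    · exact Finset.mem_biUnion.2 ⟨w₂, h.mem_right, h.color_mem_right⟩
    · exact Finset.mem_biUnion.2 ⟨w₁, h.mem_left, h.color_mem_left⟩
  have hssub : A₁ ∩ A₂ ∪ B ⊂ S :=
    (union_subset (inter_subset_left.trans h.subset_left) hB).ssubset_of_ne fun he =>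
      (mem_union.1 (he.symm.subset h.blocker_mem)).elim
        (fun hz => h.blocker_notMem (mem_inter.1 hz).2) hz₁
  have hmem : c ∈ (A₁ ∩ A₂ ∩ B).biUnion M :=
    hS.inter_biUnion_eq hR hBt hssub ▸ mem_inter.2 ⟨hcR, hz.mem_biUnion⟩
  exact (mem_inter.1 (mem_inter.1 (hz.mem_of_mem_biUnion inter_subset_right hmem)).1).1

lemma not_isSole_of_notMem (hS : IsCritical M S) (ha : IsFree M a)
    (h : IsCrossing M S c x w₁ w₂ z₁ z₂ A₁ A₂) (hz : z ∈ A₁) (hz₁ : z₁ ∉ A)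
    (hA : #(A.biUnion M \ {a}) ≤ #A) (hx : x ∈ A.biUnion M) : ¬ IsSole M A z c := by
  intro hc
  have hw : w₁ ∉ A ∩ S := fun hw => h.notMem_left <|
    hc.eq w₁ (mem_inter.1 hw).1 h.color_mem_left ▸ hz
  have hsub := h.biUnion_inter_subset hS inter_subset_right (hS.isTight_inter ha hA) hw
  rw [hS.biUnion_inter_eq ha (fun hSA => hz₁ (hSA h.blocker_mem)) hA] at hsub
  have hmem := hsub (mem_inter.2 ⟨h.isSole_left.mem_biUnion,
    mem_inter.2 ⟨hx, h.blocker_color_mem_biUnion⟩⟩)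
  have := h.isSole_left.mem_of_mem_biUnion inter_subset_left hmem
  exact hz₁ (mem_inter.1 (mem_inter.1 this).2).1

lemma isFree_of_isFlip (hS : IsCritical M S) (ha : IsFree M a)
    (h : IsCrossing M S c x w₁ w₂ z₁ z₂ A₁ A₂) (hz : z ∈ A₁)
    (hM' : IsFlip M M' a x (z₁, x) (z, c)) : IsFree M' x := by
  intro A
  by_contra! hA
  have hxa : x ≠ a := fun e => hS.notMem_biUnion ha (e ▸ h.blocker_color_mem_biUnion)
  have hfree := ha A
  have hSA : #(A.biUnion M \ {a}) < #A → S ⊆ A := hS.subset_of_card_lt ha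
  have hloss (D : Finset ℤ) (hD : x ∈ D) := hM'.card_sdiff_le A (D := D) fun _ => hD
  by_cases hzA : z₁ ∈ A
  · have hgain := hM'.card_sdiff_pair_add_one h.isSole_left.mem_set hzA hxa
    have hcard := hloss {a, x} (by simp)
    rw [if_neg (c := x ∉ _ ∧ _) (by simp)] at hcard
    have hle := card_sdiff_le_card_sdiff_insert_add_one (A.biUnion M) {a} x
    rw [pair_comm] at hle
    split_ifs at hcard with hc
    · exact hS.not_isSole (hc.2.mono (hSA (by omega)) (h.subset_left hz))
    · omega
  · have hcard := hloss {x} (by simp)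
    rw [if_neg (c := x ∉ _ ∧ _) (by simp)] at hcard
    have hle := card_le_card (sdiff_subset : A.biUnion M \ {a} ⊆ A.biUnion M)
    have hlt : ¬ #(A.biUnion M) < #A := fun hlt => hzA (hSA (hle.trans_lt hlt) h.blocker_mem)
    have hxA : x ∈ A.biUnion M := by
      by_contra hxA
      rw [sdiff_singleton_eq_erase, erase_eq_of_notMem hxA] at hcard
      split_ifs at hcard <;> omega
    have hx := card_sdiff_singleton_add_one hxA
    split_ifs at hcard with hc
    · exact h.not_isSole_of_notMem hS ha hz hzA (by omega) hxA hc.2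
    · omega

end IsCrossing

/-- A family of assignments `M` of color sets `M w ⊆ C` to indices that is closed under flipping
Kempe chains: for any two colors `a ≠ c` of `C`, the chain starting at the incidence of `c` at `w`
ends at `p w`. It models the sets of colors available at the neighbours of a vertex, for all the
signed colorings of the graph without this vertex. -/
structure KempeClosed (C : Finset ℤ) (𝓕 : Set (ι → Finset ℤ)) : Prop where
  zero_notMem : 0 ∉ C
  subset : ∀ M ∈ 𝓕, ∀ w, M w ⊆ C
  two_le_card : ∀ M ∈ 𝓕, ∀ w, 2 ≤ #(M w)
  exists_partner : ∀ M ∈ 𝓕, ∀ a ∈ C, ∀ c ∈ C, a ≠ c → ∃ p : ι → ι × ℤ,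
    Set.InjOn p {w | c ∈ M w} ∧ ∀ w, c ∈ M w →
      ((p w).2 = a ∨ (p w).2 = c ∨ (p w).2 = -a ∨ (p w).2 = -c) ∧
        ∃ M' ∈ 𝓕, IsFlip M M' a c (w, c) (p w)

/-- A Kempe closed family none of whose members has a system of distinct representatives. -/
structure IsStuck (C : Finset ℤ) (𝓕 : Set (ι → Finset ℤ)) : Prop extends KempeClosed C 𝓕 where
  not_hasTransversal : ∀ M ∈ 𝓕, ¬ HasTransversal M

namespace IsStuck

variable [Finite ι] {C : Finset ℤ} {𝓕 : Set (ι → Finset ℤ)} {w₁ w₂ z₁ z₂ : ι}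
  {A₁ A₂ : Finset ι}

lemma exists_partner_isBlocked (h𝓕 : IsStuck C 𝓕) (hM : M ∈ 𝓕) (hS : IsCritical M S)
    (ha : IsFree M a) (haC : a ∈ C) (hc : c ∈ S.biUnion M) :
    ∃ p : ι → ι × ℤ, Set.InjOn p {w | c ∈ M w} ∧ ∀ w ∈ S, c ∈ M w →
      (∃ M' ∈ 𝓕, IsFlip M M' a c (w, c) (p w)) ∧
        ((p w).2 = c ∧ (∀ v ∈ S, c ∈ M v → v = w ∨ v = (p w).1) ∨
          (p w).2 ≠ c ∧ (p w).2 ≠ a ∧ ((p w).2 = -a ∨ (p w).2 = -c) ∧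
            IsBlocked M S a w (p w).1 (p w).2) := by
  classical
  have hac : a ≠ c := fun h => hS.notMem_biUnion ha (h ▸ hc)
  obtain ⟨v, -, hcv⟩ := Finset.mem_biUnion.1 hc
  obtain ⟨p, hinj, hp⟩ := h𝓕.exists_partner M hM a haC c (h𝓕.subset M hM v hcv) hac
  refine ⟨p, hinj, fun w hw hcw => ?_⟩
  obtain ⟨hcolor, M', hM', hflip⟩ := hp w hcw
  refine ⟨⟨M', hM', hflip⟩, ?_⟩
  obtain ⟨A, hA⟩ := exists_isCritical (h𝓕.not_hasTransversal M' hM')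
  generalize p w = q at hcolor hflip ⊢
  obtain ⟨z, x⟩ := q
  by_cases hxc : x = c
  · subst hxc
    exact Or.inl ⟨rfl, hflip.eq_or_eq_of_card_lt hS ha hw hcw hA.card_lt⟩
  · obtain ⟨hxa, hblocked⟩ := hS.ne_and_isBlocked ha hw hcw hflip hxc hA.card_lt
    exact Or.inr ⟨hxc, hxa, (hcolor.resolve_left hxa).resolve_left hxc, hblocked⟩

lemma exists_isCrossing [DecidableEq ι] (h𝓕 : IsStuck C 𝓕) (hM : M ∈ 𝓕) (hS : IsCritical M S)
    (ha : IsFree M a) (haC : a ∈ C) (hb : 2 < #{w ∈ S | b ∈ M w}) :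
    a ≠ -b ∧ ∃ x w₁ w₂ z₁ z₂ A₁ A₂, (x = -a ∨ x = -b) ∧
      IsCrossing M S b x w₁ w₂ z₁ z₂ A₁ A₂ ∧ ∃ M' ∈ 𝓕, IsFlip M M' a b (w₁, b) (z₁, x) := by
  have hbS : b ∈ S.biUnion M := by
    obtain ⟨w, hw⟩ := card_pos.1 (pos_of_gt hb)
    exact Finset.mem_biUnion.2 ⟨w, mem_filter.1 hw⟩
  obtain ⟨p, hinj, hp⟩ := h𝓕.exists_partner_isBlocked hM hS ha haC hbS
  have hblocked {w : ι} (hw : w ∈ S) (hbw : b ∈ M w) : (p w).2 ≠ b ∧ (p w).2 ≠ a ∧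
      ((p w).2 = -a ∨ (p w).2 = -b) ∧ IsBlocked M S a w (p w).1 (p w).2 := by
    refine (hp w hw hbw).2.resolve_left fun h => ?_
    have hsub : {v ∈ S | b ∈ M v} ⊆ {w, (p w).1} := fun v hv => by
      simpa using h.2 v (mem_filter.1 hv).1 (mem_filter.1 hv).2
    have := card_le_card hsub
    have := card_le_two (a := w) (b := (p w).1)
    omega
  obtain ⟨w₁, h₁, w₂, h₂, hne, heq⟩ := exists_ne_map_eq_of_card_lt_of_maps_to
    (t := {-a, -b}) (card_le_two.trans_lt hb) (f := fun w => (p w).2) fun w hw => by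
      simpa using (hblocked (mem_filter.1 hw).1 (mem_filter.1 hw).2).2.2.1
  obtain ⟨hw₁, hb₁⟩ := mem_filter.1 h₁
  obtain ⟨hw₂, hb₂⟩ := mem_filter.1 h₂
  obtain ⟨hxb, hxa, hx, hblocked₁⟩ := hblocked hw₁ hb₁
  have hblocked₂ := (hblocked hw₂ hb₂).2.2.2
  rw [← heq] at hblocked₂
  have hz : (p w₁).1 ≠ (p w₂).1 := fun h => hne (hinj hb₁ hb₂ (Prod.ext h heq))
  obtain ⟨A₁, A₂, hcross⟩ := hS.exists_isCrossing ha hxa hxb hw₁ hw₂ hb₁ hb₂ hz hblocked₁ hblocked₂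
  refine ⟨?_, (p w₁).2, w₁, w₂, _, _, A₁, A₂, hx, hcross, (hp w₁ hw₁ hb₁).1⟩
  rintro rfl
  rw [neg_neg] at hx
  exact hx.elim hxb hxa

lemma not_isFree_neg (h𝓕 : IsStuck C 𝓕) (hM : M ∈ 𝓕) (ha : IsFree M a) (haC : a ∈ C) :
    ¬ IsFree M (-a) := by
  classical
  intro hna
  obtain ⟨S, hS⟩ := exists_isCritical (h𝓕.not_hasTransversal M hM)
  obtain ⟨b, hb⟩ := hS.exists_three_mem (h𝓕.two_le_card M hM)
  obtain ⟨-, x, w₁, w₂, z₁, z₂, A₁, A₂, hx, hcross, M', hM', hflip⟩ :=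
    h𝓕.exists_isCrossing hM hS ha haC hb
  obtain rfl := hx.resolve_left fun h =>
    hS.notMem_biUnion hna (h ▸ hcross.blocker_color_mem_biUnion)
  exact h𝓕.not_hasTransversal M' hM' <| (all_card_le_biUnion_card_iff_exists_injective M').1
    (hcross.card_le_card_biUnion hS ha hna hflip)

lemma not_isCrossing_neg_free [DecidableEq ι] (h𝓕 : IsStuck C 𝓕) (hS : IsCritical M S)
    (ha : IsFree M a) (haC : a ∈ C) (hM' : M' ∈ 𝓕)
    (hflip : IsFlip M M' a c (w₁, c) (z₁, -a)) :
    ¬ IsCrossing M S c (-a) w₁ w₂ z₁ z₂ A₁ A₂ := fun h =>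
  h𝓕.not_isFree_neg hM' (h.isFree_left hS ha hflip) haC
    (hflip.isFree_right hS ha h.left_mem h.color_mem_left fun he =>
      h𝓕.zero_notMem (by rwa [show a = 0 by omega] at haC))

lemma not_isFlip_of_three (h𝓕 : IsStuck C 𝓕) (hM : M ∈ 𝓕) (hS : IsCritical M S)
    (ha : IsFree M a) (hb : 2 < #{w ∈ S | b ∈ M w}) (hbb : -b ≠ b) (hz : z₁ ∈ S)
    (hbz : -b ∈ M z₁) (hM' : M' ∈ 𝓕) : ¬ IsFlip M M' a (-b) (z₁, -b) (z₂, -b) := by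
  classical
  intro h
  obtain ⟨T, hT⟩ := exists_isCritical (h𝓕.not_hasTransversal M' hM')
  have hST : S ⊆ T :=
    hS.subset_of_card_lt ha ((h.card_sdiff_singleton_le T).trans_lt hT.card_lt)
  have hbT : 2 < #{w ∈ T | b ∈ M' w} := hb.trans_le <| card_le_card fun w hw => by
    obtain ⟨hwS, hbw⟩ := mem_filter.1 hw
    exact mem_filter.2 ⟨hST hwS, (h w b hbw).2 (by simp [hbb.symm]) (by simp [hbb.symm])⟩
  have hba : -b ≠ a := fun e =>
    hS.notMem_biUnion ha (e ▸ Finset.mem_biUnion.2 ⟨z₁, hz, hbz⟩)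
  exact (h𝓕.exists_isCrossing hM' hT (h.isFree_right hS ha hz hbz hba)
    (h𝓕.subset M hM z₁ hbz) hbT).1 rfl

lemma not_isInnerBlocked [DecidableEq ι] (h𝓕 : IsStuck C 𝓕) (hM : M ∈ 𝓕) (hS : IsCritical M S)
    (ha : IsFree M a) (h : IsCrossing M S b (-b) w₁ w₂ z₁ z₂ A₁ A₂) (hM' : M' ∈ 𝓕)
    (hflip : IsFlip M M' a (-b) (z₁, -b) (z, b)) : ¬ IsInnerBlocked M S z₁ z b := by
  rintro ⟨B, hBS, hzB, hB, hsole⟩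
  have hz := h.blocker_mem_of_isSole hS ha hBS hB hzB hsole
  have hba : b ≠ a := fun e => hS.notMem_biUnion ha (e ▸ h.color_mem_biUnion)
  have hbz := h.isSole_left.mem_set
  refine h𝓕.not_isFree_neg hM' (h.isFree_of_isFlip hS ha hz hflip) (h𝓕.subset M hM z₁ hbz) ?_
  rw [neg_neg]
  exact hflip.isFree_right hS ha h.blocker_mem hbz hba

lemma not_isCrossing_neg [DecidableEq ι] (h𝓕 : IsStuck C 𝓕) (hM : M ∈ 𝓕) (hS : IsCritical M S)
    (ha : IsFree M a) (haC : a ∈ C) (hb : 2 < #{w ∈ S | b ∈ M w}) :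
    ¬ IsCrossing M S b (-b) w₁ w₂ z₁ z₂ A₁ A₂ := by
  intro h
  obtain ⟨p, hinj, hp⟩ :=
    h𝓕.exists_partner_isBlocked hM hS ha haC h.blocker_color_mem_biUnion
  have hpartner {w₁ w₂ z₁ z₂ : ι} {A₁ A₂ : Finset ι}
      (h : IsCrossing M S b (-b) w₁ w₂ z₁ z₂ A₁ A₂) :
      (p z₁).2 = -a ∧ (p z₁).2 ≠ a ∧ (p z₁).2 ≠ -b ∧ IsBlocked M S a z₁ (p z₁).1 (p z₁).2 := by
    have hz₁ := h.isSole_left.mem_set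
    obtain ⟨⟨M', hM', hflip⟩, ⟨hcolor, -⟩ | ⟨hne, hxa, hcolor, hblocked⟩⟩ :=
      hp z₁ h.blocker_mem hz₁
    · exact absurd (hcolor ▸ hflip)
        (h𝓕.not_isFlip_of_three hM hS ha hb h.ne h.blocker_mem hz₁ hM' (z₂ := (p z₁).1))
    refine ⟨hcolor.resolve_right fun hcolor => ?_, hxa, hne, hblocked⟩
    rw [neg_neg] at hcolor
    rw [← Prod.mk.eta (p := p z₁), hcolor] at hflip
    rw [hcolor] at hblocked
    exact hblocked.elim (fun hx => hx.1 h.color_mem_biUnion)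
      fun hx => h𝓕.not_isInnerBlocked hM hS ha h hM' hflip hx.2
  obtain ⟨hcolor₁, hxa, hne, hblocked₁⟩ := hpartner h
  obtain ⟨hcolor₂, -, -, hblocked₂⟩ := hpartner h.symm
  have hz₁ := h.isSole_left.mem_set
  have hz₂ := h.isSole_right.mem_set
  have hz : (p z₁).1 ≠ (p z₂).1 := fun he => h.blocker_notMem <|
    hinj hz₁ hz₂ (Prod.ext he (hcolor₁.trans hcolor₂.symm)) ▸ h.isSole_right.mem
  obtain ⟨M', hM', hflip⟩ := (hp z₁ h.blocker_mem hz₁).1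
  rw [← Prod.mk.eta (p := p z₁)] at hflip
  rw [hcolor₁] at hxa hne hblocked₁ hflip
  rw [hcolor₂] at hblocked₂
  obtain ⟨B₁, B₂, hcross⟩ := hS.exists_isCrossing ha hxa hne h.blocker_mem h.symm.blocker_mem
    hz₁ hz₂ hz hblocked₁ hblocked₂
  exact h𝓕.not_isCrossing_neg_free hS ha haC hM' hflip hcross

lemma not_isFree (h𝓕 : IsStuck C 𝓕) (hM : M ∈ 𝓕) (haC : a ∈ C) : ¬ IsFree M a := by
  classical
  intro ha
  obtain ⟨S, hS⟩ := exists_isCritical (h𝓕.not_hasTransversal M hM)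
  obtain ⟨b, hb⟩ := hS.exists_three_mem (h𝓕.two_le_card M hM)
  obtain ⟨-, x, w₁, w₂, z₁, z₂, A₁, A₂, rfl | rfl, hcross, M', hM', hflip⟩ :=
    h𝓕.exists_isCrossing hM hS ha haC hb
  · exact h𝓕.not_isCrossing_neg_free hS ha haC hM' hflip hcross
  · exact h𝓕.not_isCrossing_neg hM hS ha haC hb hcross

end IsStuck

lemma isFree_of_injOn {f : ι → ℤ} {y : ι} (hf : Set.InjOn f {y}ᶜ)
    (hfM : ∀ w ≠ y, f w ∈ M w) (ha : ∀ w ≠ y, f w ≠ a) : IsFree M a := by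
  classical
  intro A
  have hne {w : ι} (hw : w ∈ A.erase y) : w ≠ y := ne_of_mem_erase hw
  have hcard : #(A.erase y) ≤ #(A.biUnion M \ {a}) :=
    card_le_card_of_injOn f (fun w hw => mem_coe.2 <| mem_sdiff.2
      ⟨Finset.mem_biUnion.2 ⟨w, mem_of_mem_erase hw, hfM w (hne hw)⟩,
        by simpa using ha w (hne hw)⟩)
      fun w hw v hv => hf (hne hw) (hne hv)
  have := pred_card_le_card_erase (s := A) (a := y)
  omega

theorem KempeClosed.exists_hasTransversal [Fintype ι] {C : Finset ℤ} {𝓕 : Set (ι → Finset ℤ)}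
    (h𝓕 : KempeClosed C 𝓕) (hC : Fintype.card ι ≤ #C) (hM : M ∈ 𝓕) {f : ι → ℤ} {y : ι}
    (hf : Set.InjOn f {y}ᶜ) (hfM : ∀ w ≠ y, f w ∈ M w) : ∃ M' ∈ 𝓕, HasTransversal M' := by
  classical
  by_contra! hT
  have hcard : #((univ.erase y).image f) < #C := by
    have := card_image_le (s := univ.erase y) (f := f)
    have := card_erase_add_one (mem_univ y)
    rw [card_univ] at this
    omega
  obtain ⟨a, haC, ha⟩ := exists_mem_notMem_of_card_lt_card hcard
  refine IsStuck.not_isFree ⟨h𝓕, hT⟩ hM haC (isFree_of_injOn hf hfM fun w hw he => ha ?_)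
  exact mem_image.2 ⟨w, mem_erase.2 ⟨hw, mem_univ w⟩, he⟩

end Blocking

end Flips

/-! ### Orbits of two involutions -/

section Involutions

variable {N : Type*} {i j : Equiv.Perm N} {p q s x : N}

lemma dvd_sub_of_dvd_two_mul {m n k : ℤ} (hn : ¬ m ∣ n) (hn2 : m ∣ 2 * n) (hk : ¬ m ∣ k)
    (hk2 : m ∣ 2 * k) : m ∣ n - k := by
  obtain ⟨c, hc⟩ := hn2
  obtain ⟨d, hd⟩ := hk2
  have hodd {x c : ℤ} (hx : ¬ m ∣ x) (hc : 2 * x = m * c) : Odd c := by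
    refine Int.not_even_iff_odd.1 fun ⟨c', hc'⟩ => hx ⟨c', ?_⟩
    subst hc'
    linarith
  obtain ⟨e, he⟩ := (hodd hn hc).sub_odd (hodd hk hd)
  refine ⟨e, ?_⟩
  have : m * c - m * d = m * (e + e) := by rw [← mul_sub, he]
  linarith

lemma apply_mul_zpow_apply (hi : i * i = 1) (hj : j * j = 1) (hp : j p = p) (n : ℤ) :
    j (((j * i) ^ n) p) = ((j * i) ^ (-n)) p := by
  have hinv : (j * i)⁻¹ = j * (j * i) * j⁻¹ := by
    rw [mul_inv_rev, inv_eq_of_mul_eq_one_left hi, inv_eq_of_mul_eq_one_left hj, ← mul_assoc, hj,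
      one_mul]
  rw [zpow_neg, ← inv_zpow, hinv, conj_zpow, Equiv.Perm.mul_apply, Equiv.Perm.mul_apply,
    Equiv.Perm.inv_eq_iff_eq.2 hp.symm]

lemma sameCycle_mul_apply_left_iff (hi : i * i = 1) (hj : j * j = 1) (hp : j p = p) :
    (j * i).SameCycle p (j x) ↔ (j * i).SameCycle p x := by
  have hmap {y : N} : (j * i).SameCycle p y → (j * i).SameCycle p (j y) := by
    rintro ⟨n, rfl⟩
    exact ⟨-n, (apply_mul_zpow_apply hi hj hp n).symm⟩
  refine ⟨fun h => ?_, hmap⟩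
  have := hmap h
  rwa [← Equiv.Perm.mul_apply, hj, Equiv.Perm.one_apply] at this

lemma sameCycle_mul_apply_right_iff (hi : i * i = 1) (hj : j * j = 1) (hp : j p = p) :
    (j * i).SameCycle p (i x) ↔ (j * i).SameCycle p x := by
  rw [← Equiv.Perm.sameCycle_apply_right, Equiv.Perm.mul_apply, ← Equiv.Perm.mul_apply i, hi,
    Equiv.Perm.one_apply, sameCycle_mul_apply_left_iff hi hj hp]

lemma eq_of_sameCycle_of_apply_eq (hi : i * i = 1) (hj : j * j = 1) (hp : j p = p) (hq : j q = q)
    (hs : j s = s) (hpq : (j * i).SameCycle p q) (hps : (j * i).SameCycle p s) (hqp : q ≠ p)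
    (hsp : s ≠ p) : q = s := by
  obtain ⟨n, rfl⟩ := hpq
  obtain ⟨k, rfl⟩ := hps
  have hperiod (n : ℤ) : ((j * i) ^ n) p = p ↔ (Function.minimalPeriod ((j * i) • ·) p : ℤ) ∣ n :=
    MulAction.zpow_smul_eq_iff_minimalPeriod_dvd (a := j * i) (b := p)
  have hfixed {n : ℤ} (h : j (((j * i) ^ n) p) = ((j * i) ^ n) p) : ((j * i) ^ (2 * n)) p = p := by
    rw [apply_mul_zpow_apply hi hj hp] at h
    rw [two_mul, zpow_add, Equiv.Perm.mul_apply, ← h, ← Equiv.Perm.mul_apply, ← zpow_add,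
      add_neg_cancel, zpow_zero, Equiv.Perm.one_apply]
  rw [Ne, hperiod] at hqp hsp
  have hnk := (hperiod _).2 <| dvd_sub_of_dvd_two_mul hsp ((hperiod _).1 (hfixed hs)) hqp
    ((hperiod _).1 (hfixed hq))
  rw [sub_eq_neg_add, zpow_add, zpow_neg, Equiv.Perm.mul_apply, Equiv.Perm.inv_eq_iff_eq] at hnk
  exact hnk.symm

end Involutions

lemma exists_injOn_partner {T : Type*} (r : Setoid T) (E : Set T)
    (hE : ∀ p ∈ E, ∀ q ∈ E, ∀ s ∈ E, r p q → r p s → q ≠ p → s ≠ p → q = s) :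
    ∃ e : T → T, Set.InjOn e E ∧
      ∀ p ∈ E, e p ∈ E ∧ r p (e p) ∧ ∀ q ∈ E, r p q → q = p ∨ q = e p := by
  have hpartner : ∀ p, ∃ e, p ∈ E → e ∈ E ∧ r p e ∧ ∀ q ∈ E, r p q → q = p ∨ q = e := by
    intro p
    by_cases h : ∃ e ∈ E, r p e ∧ e ≠ p
    · obtain ⟨e, he, hpe, hne⟩ := h
      exact ⟨e, fun hp => ⟨he, hpe, fun q hq hpq =>
        or_iff_not_imp_left.2 fun hqp => hE p hp q hq e he hpq hpe hqp hne⟩⟩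
    · push Not at h
      exact ⟨p, fun hp => ⟨hp, r.refl p, fun q hq hpq => Or.inl (h q hq hpq)⟩⟩
  choose e he using hpartner
  refine ⟨e, fun p hp q hq hpq => ?_, he⟩
  have hr : r p q := r.trans (he p hp).2.1 (hpq ▸ r.symm (he q hq).2.1)
  rcases (he p hp).2.2 q hq hr with hqp | hqp
  · exact hqp.symm
  · exact ((he q hq).2.2 p hp (r.symm hr)).elim id fun hpq' => hpq'.trans (hpq.symm.trans hqp.symm)

/-! ### Kempe chains in signed graphs -/

section Kempe

/-- A finite set of nonzero colors which is closed under change of sign. -/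
structure IsColorSet (C : Finset ℤ) : Prop where
  zero_notMem : 0 ∉ C
  neg_mem : ∀ x ∈ C, -x ∈ C

lemma IsColorSet.ne_zero {C : Finset ℤ} (hC : IsColorSet C) {x : ℤ} (hx : x ∈ C) : x ≠ 0 :=
  fun h => hC.zero_notMem (h ▸ hx)

lemma IsColorSet.units_mul_mem {C : Finset ℤ} (hC : IsColorSet C) (ε : ℤˣ) {x : ℤ} (hx : x ∈ C) :
    ε * x ∈ C := by
  rcases Int.units_eq_one_or ε with rfl | rfl
  · simpa using hx
  · simpa using hC.neg_mem x hx

section SignedSwap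

variable {a b : ℤ}

lemma signedSwap_signedSwap (ha : a ≠ 0) (hb : b ≠ 0) (hab : a ≠ b) (x : ℤ) :
    signedSwap a b (signedSwap a b x) = x := by
  unfold signedSwap; split_ifs <;> omega

lemma signedSwap_units_mul (ha : a ≠ 0) (hb : b ≠ 0) (ε : ℤˣ) (x : ℤ) :
    signedSwap a b (ε * x) = ε * signedSwap a b x := by
  rcases Int.units_eq_one_or ε with rfl | rfl
  · simp
  · rw [Units.val_neg, Units.val_one, neg_one_mul, neg_one_mul]
    unfold signedSwap; split_ifs <;> omega

lemma IsColorSet.signedSwap_mem {C : Finset ℤ} (hC : IsColorSet C) (ha : a ∈ C) (hb : b ∈ C)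
    {x : ℤ} (hx : x ∈ C) : signedSwap a b x ∈ C := by
  unfold signedSwap
  split_ifs
  exacts [hb, ha, hC.neg_mem b hb, hC.neg_mem a ha, hx]

end SignedSwap

variable {V : Type*} {G : SimpleGraph V} {ε : Sym2 V → ℤˣ} {C : Finset ℤ} {γ : V → V → ℤ}
  {a b : ℤ} {p q s : V × ℤ} {i j : Equiv.Perm (V × ℤ)}

/-- A proper coloring, with colors in `C`, of the graph `G` with signature `ε`, where `γ v w` is
the color of the edge `vw` at `v`. -/
structure IsSignedColoring (G : SimpleGraph V) (ε : Sym2 V → ℤˣ) (C : Finset ℤ) (γ : V → V → ℤ) :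
    Prop where
  mem : ∀ ⦃v w⦄, G.Adj v w → γ v w ∈ C
  compat : ∀ ⦃v w⦄, G.Adj v w → γ v w = -(ε s(v, w) * γ w v)
  inj : ∀ ⦃v w x⦄, G.Adj v w → G.Adj v x → γ v w = γ v x → w = x

/-- No edge at the vertex `p.1` has the color `p.2` there. -/
def IsMissing (G : SimpleGraph V) (γ : V → V → ℤ) (p : V × ℤ) : Prop :=
  ∀ w, G.Adj p.1 w → γ p.1 w ≠ p.2

lemma exists_adj_of_not_isMissing {v : V} {x : ℤ} (h : ¬ IsMissing G γ (v, x)) :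
    ∃ w, G.Adj v w ∧ γ v w = x := by
  rw [IsMissing] at h
  push Not at h
  exact h

/-- Two involutions generating the Kempe chains of the colors `±a` and `±b`: at each vertex `i`
swaps `a` with `b` and `-a` with `-b`, and `j` moves along an edge, from its color at one end to its
color at the other end. -/
structure IsKempePair (G : SimpleGraph V) (γ : V → V → ℤ) (a b : ℤ) (i j : Equiv.Perm (V × ℤ)) :
    Prop where
  mul_self_left : i * i = 1
  mul_self_right : j * j = 1
  apply_left : ∀ v x, i (v, x) = (v, signedSwap a b x)
  apply_right : ∀ ⦃v w⦄, G.Adj v w → j (v, γ v w) = (w, γ w v)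
  apply_right_of_isMissing : ∀ ⦃p⦄, IsMissing G γ p → j p = p

/-- The coloring obtained from `γ` by exchanging `a` with `b` and `-a` with `-b` at the incidences
satisfying `K`. -/
noncomputable def kempeFlip (γ : V → V → ℤ) (a b : ℤ) (K : V × ℤ → Prop) (v w : V) : ℤ :=
  open Classical in if K (v, γ v w) then signedSwap a b (γ v w) else γ v w

lemma IsSignedColoring.exists_across (hγ : IsSignedColoring G ε C γ) :
    ∃ j : Equiv.Perm (V × ℤ), j * j = 1 ∧ (∀ ⦃v w⦄, G.Adj v w → j (v, γ v w) = (w, γ w v)) ∧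
      ∀ ⦃p⦄, IsMissing G γ p → j p = p := by
  classical
  let j : V × ℤ → V × ℤ := fun p =>
    if h : ∃ w, G.Adj p.1 w ∧ γ p.1 w = p.2 then (h.choose, γ h.choose p.1) else p
  have hadj : ∀ ⦃v w⦄, G.Adj v w → j (v, γ v w) = (w, γ w v) := by
    intro v w hvw
    have h : ∃ w', G.Adj v w' ∧ γ v w' = γ v w := ⟨w, hvw, rfl⟩
    have hw : h.choose = w := hγ.inj h.choose_spec.1 hvw h.choose_spec.2
    simp only [j]
    rw [dif_pos h, hw]
  have hmissing : ∀ ⦃p⦄, IsMissing G γ p → j p = p := fun p hp =>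
    dif_neg fun ⟨w, hw, hwp⟩ => hp w hw hwp
  have hj : Function.Involutive j := by
    rintro ⟨v, x⟩
    by_cases h : IsMissing G γ (v, x)
    · rw [hmissing h, hmissing h]
    · obtain ⟨w, hw, rfl⟩ := exists_adj_of_not_isMissing h
      rw [hadj hw, hadj hw.symm]
  exact ⟨hj.toPerm, Equiv.ext hj, hadj, hmissing⟩

lemma IsSignedColoring.exists_isKempePair (hC : IsColorSet C) (hγ : IsSignedColoring G ε C γ)
    (ha : a ∈ C) (hb : b ∈ C) (hab : a ≠ b) : ∃ i j, IsKempePair G γ a b i j := by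
  have hswap := signedSwap_signedSwap (hC.ne_zero ha) (hC.ne_zero hb) hab
  have hi : Function.Involutive fun p : V × ℤ => (p.1, signedSwap a b p.2) := fun p =>
    Prod.ext rfl (hswap p.2)
  obtain ⟨j, hj, hadj, hmissing⟩ := hγ.exists_across
  exact ⟨hi.toPerm, j, Equiv.ext hi, hj, fun _ _ => rfl, hadj, hmissing⟩

namespace IsKempePair

lemma eq_of_sameCycle (h : IsKempePair G γ a b i j) (hp : IsMissing G γ p) (hq : IsMissing G γ q)
    (hs : IsMissing G γ s) (hpq : (j * i).SameCycle p q) (hps : (j * i).SameCycle p s)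
    (hqp : q ≠ p) (hsp : s ≠ p) : q = s :=
  eq_of_sameCycle_of_apply_eq h.mul_self_left h.mul_self_right (h.apply_right_of_isMissing hp)
    (h.apply_right_of_isMissing hq) (h.apply_right_of_isMissing hs) hpq hps hqp hsp

lemma sameCycle_signedSwap_iff (h : IsKempePair G γ a b i j) (hp : IsMissing G γ p) (v : V)
    (x : ℤ) : (j * i).SameCycle p (v, signedSwap a b x) ↔ (j * i).SameCycle p (v, x) := by
  rw [← h.apply_left]
  exact sameCycle_mul_apply_right_iff h.mul_self_left h.mul_self_right
    (h.apply_right_of_isMissing hp)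

lemma sameCycle_across_iff (h : IsKempePair G γ a b i j) (hp : IsMissing G γ p) {v w : V}
    (hvw : G.Adj v w) : (j * i).SameCycle p (w, γ w v) ↔ (j * i).SameCycle p (v, γ v w) := by
  rw [← h.apply_right hvw]
  exact sameCycle_mul_apply_left_iff h.mul_self_left h.mul_self_right
    (h.apply_right_of_isMissing hp)

lemma color_mem_of_sameCycle (h : IsKempePair G γ a b i j) (hγ : IsSignedColoring G ε C γ)
    (hpq : (j * i).SameCycle p q) (hp : p.2 ∈ ({a, b, -a, -b} : Set ℤ)) :
    q.2 ∈ ({a, b, -a, -b} : Set ℤ) := by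
  have hleft (p : V × ℤ) : (i p).2 ∈ ({a, b, -a, -b} : Set ℤ) ↔ p.2 ∈ ({a, b, -a, -b} : Set ℤ) := by
    obtain ⟨v, x⟩ := p
    simp only [h.apply_left, Set.mem_insert_iff, Set.mem_singleton_iff]
    unfold signedSwap; split_ifs <;> omega
  have hright (p : V × ℤ) :
      (j p).2 ∈ ({a, b, -a, -b} : Set ℤ) ↔ p.2 ∈ ({a, b, -a, -b} : Set ℤ) := by
    obtain ⟨v, x⟩ := p
    by_cases hx : IsMissing G γ (v, x)
    · rw [h.apply_right_of_isMissing hx]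
    · obtain ⟨w, hw, rfl⟩ := exists_adj_of_not_isMissing hx
      have hcompat := hγ.compat hw
      simp only [h.apply_right hw, Set.mem_insert_iff, Set.mem_singleton_iff]
      rcases Int.units_eq_one_or (ε s(v, w)) with hε | hε <;>
        simp only [hε, Units.val_neg, Units.val_one] at hcompat <;> omega
  have hbij : Set.BijOn (j * i) (Prod.snd ⁻¹' {a, b, -a, -b}) (Prod.snd ⁻¹' {a, b, -a, -b}) :=
    Equiv.bijOn _ fun p => (hright (i p)).trans (hleft p)
  obtain ⟨n, rfl⟩ := hpq
  exact (hbij.perm_zpow n).mapsTo hp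

lemma isSignedColoring_kempeFlip (h : IsKempePair G γ a b i j) (hC : IsColorSet C)
    (hγ : IsSignedColoring G ε C γ) (ha : a ∈ C) (hb : b ∈ C) (hab : a ≠ b)
    (hp : IsMissing G γ p) :
    IsSignedColoring G ε C (kempeFlip γ a b ((j * i).SameCycle p)) where
  mem v w hvw := by
    unfold kempeFlip
    split_ifs
    exacts [hC.signedSwap_mem ha hb (hγ.mem hvw), hγ.mem hvw]
  compat v w hvw := by
    have hacross := h.sameCycle_across_iff hp hvw
    unfold kempeFlip
    split_ifs with hv hw hw
    · conv_lhs => rw [hγ.compat hvw, ← neg_mul, ← Units.val_neg,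
        signedSwap_units_mul (hC.ne_zero ha) (hC.ne_zero hb), Units.val_neg, neg_mul]
    · exact absurd (hacross.2 hv) hw
    · exact absurd (hacross.1 hw) hv
    · exact hγ.compat hvw
  inj v w x hvw hvx he := by
    have hswap := signedSwap_signedSwap (hC.ne_zero ha) (hC.ne_zero hb) hab
    simp only [kempeFlip] at he
    refine hγ.inj hvw hvx ?_
    split_ifs at he with hw hx hx
    · rw [← hswap (γ v w), he, hswap]
    · rw [← he, h.sameCycle_signedSwap_iff hp] at hx
      exact absurd hw hx
    · rw [he, h.sameCycle_signedSwap_iff hp] at hw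
      exact absurd hx hw
    · exact he

lemma isMissing_kempeFlip (h : IsKempePair G γ a b i j) (hp : IsMissing G γ p) {v : V} {x : ℤ}
    (hx : IsMissing G γ (v, x)) (hpx : ¬ (j * i).SameCycle p (v, x)) :
    IsMissing G (kempeFlip γ a b ((j * i).SameCycle p)) (v, x) := by
  intro w hw he
  simp only [kempeFlip] at he
  split_ifs at he with hpw
  · rw [← h.sameCycle_signedSwap_iff hp, he] at hpw
    exact hpx hpw
  · exact hx w hw he

lemma isMissing_kempeFlip_signedSwap (h : IsKempePair G γ a b i j) (hp : IsMissing G γ p) {v : V}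
    {x : ℤ} (hx : IsMissing G γ (v, x)) (hpx : (j * i).SameCycle p (v, x)) :
    IsMissing G (kempeFlip γ a b ((j * i).SameCycle p)) (v, signedSwap a b x) := by
  intro w hw he
  simp only [kempeFlip] at he
  split_ifs at he with hpw
  · have hi : i (v, γ v w) = i (v, x) := by rw [h.apply_left, h.apply_left, he]
    exact hx w hw (Prod.mk.inj (i.injective hi)).2
  · rw [he, h.sameCycle_signedSwap_iff hp] at hpw
    exact hpw hpx

end IsKempePair

section Available

variable {sg : V → ℤˣ} {X : Finset V}

open Classical in
/-- The colors of `C` available for a new edge `uv`, measured at its end `u`; here `sg v` is minus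
the sign of this edge, so that `x` at `u` becomes `sg v * x` at `v`. -/
noncomputable def availableColors (G : SimpleGraph V) (C : Finset ℤ) (sg : V → ℤˣ) (γ : V → V → ℤ)
    (v : V) : Finset ℤ :=
  {x ∈ C | IsMissing G γ (v, sg v * x)}

lemma mem_availableColors {v : V} {x : ℤ} :
    x ∈ availableColors G C sg γ v ↔ x ∈ C ∧ IsMissing G γ (v, sg v * x) := by
  simp only [availableColors, mem_filter]

lemma card_le_card_availableColors_add_ncard [Finite V] (G : SimpleGraph V) (C : Finset ℤ)
    (sg : V → ℤˣ) (γ : V → V → ℤ) (v : V) :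
    #C ≤ #(availableColors G C sg γ v) + (G.neighborSet v).ncard := by
  classical
  have hfin := (G.neighborSet v).toFinite
  have hsub : C ⊆ availableColors G C sg γ v ∪ hfin.toFinset.image fun w => sg v * γ v w := by
    intro x hx
    rw [mem_union, mem_availableColors, or_iff_not_imp_left]
    intro h
    obtain ⟨w, hw, hwx⟩ := exists_adj_of_not_isMissing fun hm => h ⟨hx, hm⟩
    refine mem_image.2 ⟨w, hfin.mem_toFinset.2 hw, ?_⟩
    rw [hwx, ← mul_assoc, ← Units.val_mul, Int.units_mul_self, Units.val_one, one_mul]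
  rw [Set.ncard_eq_toFinset_card _ hfin]
  exact (card_le_card hsub).trans
    ((card_union_le ..).trans (Nat.add_le_add_left card_image_le _))

lemma IsKempePair.isFlip_availableColors (h : IsKempePair G γ a b i j) (hC : IsColorSet C)
    (ha : a ∈ C) (hb : b ∈ C) {ι : Type*} {g : ι → V} {p q : ι × ℤ}
    (hp : IsMissing G γ (g p.1, sg (g p.1) * p.2))
    (hK : ∀ v, ∀ x ∈ availableColors G C sg γ (g v),
      (j * i).SameCycle (g p.1, sg (g p.1) * p.2) (g v, sg (g v) * x) ↔ (v, x) = p ∨ (v, x) = q) :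
    IsFlip (fun v => availableColors G C sg γ (g v)) (fun v => availableColors G C sg
      (kempeFlip γ a b ((j * i).SameCycle (g p.1, sg (g p.1) * p.2))) (g v)) a b p q := by
  intro v x hx
  obtain ⟨hxC, hmissing⟩ := mem_availableColors.1 hx
  refine ⟨fun hpq => mem_availableColors.2 ⟨hC.signedSwap_mem ha hb hxC, ?_⟩,
    fun hxp hxq => mem_availableColors.2 ⟨hxC, ?_⟩⟩
  · rw [← signedSwap_units_mul (hC.ne_zero ha) (hC.ne_zero hb)]
    exact h.isMissing_kempeFlip_signedSwap hp hmissing ((hK v x hx).2 hpq)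
  · exact h.isMissing_kempeFlip hp hmissing fun hs => ((hK v x hx).1 hs).elim hxp hxq

lemma IsKempePair.exists_partner (h : IsKempePair G γ a b i j)
    (hγ : IsSignedColoring G ε C γ) {ι : Type*} {g : ι → V} (hg : Function.Injective g) :
    ∃ e : ι × ℤ → ι × ℤ, Set.InjOn e {t | t.2 ∈ availableColors G C sg γ (g t.1)} ∧
      ∀ p : ι × ℤ, p.2 ∈ availableColors G C sg γ (g p.1) →
        (p.2 ∈ ({a, b, -a, -b} : Set ℤ) → (e p).2 ∈ ({a, b, -a, -b} : Set ℤ)) ∧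
        ∀ v, ∀ x ∈ availableColors G C sg γ (g v),
          (j * i).SameCycle (g p.1, sg (g p.1) * p.2) (g v, sg (g v) * x) ↔
            (v, x) = p ∨ (v, x) = e p := by
  let φ : ι × ℤ → V × ℤ := fun t => (g t.1, sg (g t.1) * t.2)
  have hφ : Function.Injective φ := by
    rintro ⟨v, x⟩ ⟨w, y⟩ he
    obtain ⟨hvw, hxy⟩ := Prod.mk.inj he
    obtain rfl := hg hvw
    exact Prod.ext rfl (mul_left_cancel₀ (sg (g v)).ne_zero hxy)
  have hcolor (t : ι × ℤ) :
      (φ t).2 ∈ ({a, b, -a, -b} : Set ℤ) ↔ t.2 ∈ ({a, b, -a, -b} : Set ℤ) := by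
    simp only [φ, Set.mem_insert_iff, Set.mem_singleton_iff]
    rcases Int.units_eq_one_or (sg (g t.1)) with hs | hs <;>
      simp only [hs, Units.val_neg, Units.val_one] <;> omega
  have hmissing {t : ι × ℤ} (ht : t.2 ∈ availableColors G C sg γ (g t.1)) :
      IsMissing G γ (φ t) := (mem_availableColors.1 ht).2
  obtain ⟨e, he, hpartner⟩ := exists_injOn_partner
    (Setoid.comap φ (Equiv.Perm.SameCycle.setoid (j * i)))
    {t | t.2 ∈ availableColors G C sg γ (g t.1)} fun p hp q hq s hs hpq hps hqp hsp =>
      hφ (h.eq_of_sameCycle (hmissing hp) (hmissing hq) (hmissing hs) hpq hps (hφ.ne hqp)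
        (hφ.ne hsp))
  refine ⟨e, he, fun p hp => ?_⟩
  obtain ⟨hep, hr, hunique⟩ := hpartner p hp
  refine ⟨fun hpc => (hcolor _).1 (h.color_mem_of_sameCycle hγ hr ((hcolor p).2 hpc)),
    fun v x hx => ⟨hunique (v, x) hx, ?_⟩⟩
  rintro (rfl | hvx)
  · exact Equiv.Perm.SameCycle.rfl
  · rwa [← hvx] at hr

lemma kempeClosed_availableColors [Finite V] (hC : IsColorSet C) (G : SimpleGraph V)
    (ε : Sym2 V → ℤˣ) (sg : V → ℤˣ) (hX : ∀ w ∈ X, (G.neighborSet w).ncard + 2 ≤ #C) :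
    KempeClosed C {M | ∃ γ, IsSignedColoring G ε C γ ∧
      M = fun w : X => availableColors G C sg γ w} where
  zero_notMem := hC.zero_notMem
  subset := by
    rintro _ ⟨γ, -, rfl⟩ w x hx
    exact (mem_availableColors.1 hx).1
  two_le_card := by
    rintro _ ⟨γ, -, rfl⟩ w
    have := hX w w.2
    have := card_le_card_availableColors_add_ncard G C sg γ w
    dsimp only
    omega
  exists_partner := by
    rintro _ ⟨γ, hγ, rfl⟩ a ha c hc hac
    obtain ⟨i, j, h⟩ := hγ.exists_isKempePair hC ha hc hac
    obtain ⟨e, he, hpartner⟩ := h.exists_partner hγ (sg := sg) (g := ((↑) : X → V))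
      Subtype.val_injective
    refine ⟨fun w => e (w, c), fun v hv w hw hvw => (Prod.mk.inj (he hv hw hvw)).1,
      fun w hw => ?_⟩
    obtain ⟨hcolor, hK⟩ := hpartner (w, c) hw
    have hmissing := (mem_availableColors.1 hw).2
    exact ⟨hcolor (by simp), _, ⟨_, h.isSignedColoring_kempeFlip hC hγ ha hc hac hmissing, rfl⟩,
      h.isFlip_availableColors hC ha hc (g := ((↑) : X → V)) (p := (w, c)) hmissing hK⟩

lemma IsSignedColoring.exists_injOn_availableColors [Finite V] (hC : IsColorSet C)
    (hγ : IsSignedColoring G ε C γ) (sg : V → ℤˣ)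
    (hX : ∀ w ∈ X, (G.neighborSet w).ncard + 2 ≤ #C) (hcard : #X ≤ #C) :
    ∃ γ A, IsSignedColoring G ε C γ ∧ Set.InjOn A X ∧
      ∀ w ∈ X, A w ∈ availableColors G C sg γ w := by
  classical
  induction X using Finset.induction_on with
  | empty => exact ⟨γ, 0, hγ, by simp, by simp⟩
  | insert y S _ ih =>
    obtain ⟨γ₁, A, hγ₁, hA, hAmem⟩ := ih (fun w hw => hX w (mem_insert_of_mem hw))
      ((card_le_card (subset_insert y S)).trans hcard)
    have hS {w : ↥(insert y S)} (hw : w ≠ ⟨y, mem_insert_self y S⟩) : (w : V) ∈ S :=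
      (mem_insert.1 w.2).resolve_left fun h => hw (Subtype.ext h)
    obtain ⟨_, ⟨γ₂, hγ₂, rfl⟩, f, hf, hfmem⟩ :=
      (kempeClosed_availableColors hC G ε sg hX).exists_hasTransversal
        (by rwa [Fintype.card_coe]) ⟨γ₁, hγ₁, rfl⟩ (f := fun w => A w)
        (fun v hv w hw he => Subtype.ext (hA (hS hv) (hS hw) he)) fun w hw => hAmem w (hS hw)
    have hextend (w : ↥(insert y S)) : Function.extend Subtype.val f 0 (w : V) = f w :=
      Subtype.val_injective.extend_apply f 0 w
    refine ⟨γ₂, Function.extend Subtype.val f 0, hγ₂, fun v hv w hw he => ?_, fun w hw => ?_⟩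
    · rw [hextend ⟨v, hv⟩, hextend ⟨w, hw⟩] at he
      exact congrArg Subtype.val (hf he)
    · rw [hextend ⟨w, hw⟩]
      exact hfmem ⟨w, hw⟩

end Available

end Kempe

/-! ### Extending a coloring to a removed vertex -/

section Extension

variable {V : Type*} {ε : Sym2 V → ℤˣ} {C : Finset ℤ} {γ : V → V → ℤ}

/-- The extension of `γ` to the edges at `u`, where `A v` is the color at `u` of the edge `uv`. -/
noncomputable def extendStar (ε : Sym2 V → ℤˣ) (γ : V → V → ℤ) (u : V) (A : V → ℤ) (v w : V) : ℤ :=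
  open Classical in if v = u then A w else if w = u then -(ε s(u, v) * A v) else γ v w

lemma extendStar_left (ε : Sym2 V → ℤˣ) (γ : V → V → ℤ) (u : V) (A : V → ℤ) (w : V) :
    extendStar ε γ u A u w = A w :=
  if_pos rfl

lemma extendStar_right (ε : Sym2 V → ℤˣ) (γ : V → V → ℤ) {u v : V} (A : V → ℤ) (hv : v ≠ u) :
    extendStar ε γ u A v u = -(ε s(u, v) * A v) := by
  rw [extendStar, if_neg hv, if_pos rfl]

lemma extendStar_of_ne (ε : Sym2 V → ℤˣ) (γ : V → V → ℤ) {u v w : V} (A : V → ℤ) (hv : v ≠ u)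
    (hw : w ≠ u) : extendStar ε γ u A v w = γ v w := by
  rw [extendStar, if_neg hv, if_neg hw]

lemma IsSignedColoring.eq_of_extendStar_eq {H : SimpleGraph V} {u : V}
    (hγ : IsSignedColoring (H.deleteIncidenceSet u) ε C γ) {A : V → ℤ}
    (hA : Set.InjOn A (H.neighborSet u))
    (hne : ∀ v w, H.Adj u v → (H.deleteIncidenceSet u).Adj v w → γ v w ≠ -(ε s(u, v) * A v))
    {v w x : V} (hw : H.Adj v w) (hx : H.Adj v x)
    (he : extendStar ε γ u A v w = extendStar ε γ u A v x) : w = x := by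
  by_cases hv : v = u
  · subst hv
    rw [extendStar_left, extendStar_left] at he
    exact hA hw hx he
  have hdelete {w : V} (hwu : w ≠ u) (h : H.Adj v w) : (H.deleteIncidenceSet u).Adj v w :=
    H.deleteIncidenceSet_adj.2 ⟨h, hv, hwu⟩
  by_cases hwu : w = u <;> by_cases hxu : x = u
  · rw [hwu, hxu]
  · subst hwu
    rw [extendStar_right ε γ A hv, extendStar_of_ne ε γ A hv hxu] at he
    exact absurd he.symm (hne v x hw.symm (hdelete hxu hx))
  · subst hxu
    rw [extendStar_right ε γ A hv, extendStar_of_ne ε γ A hv hwu] at he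
    exact absurd he (hne v w hx.symm (hdelete hwu hw))
  · rw [extendStar_of_ne ε γ A hv hwu, extendStar_of_ne ε γ A hv hxu] at he
    exact hγ.inj (hdelete hwu hw) (hdelete hxu hx) he

lemma IsSignedColoring.extendStar (hC : IsColorSet C) {H : SimpleGraph V} {u : V}
    (hγ : IsSignedColoring (H.deleteIncidenceSet u) ε C γ) {A : V → ℤ}
    (hA : Set.InjOn A (H.neighborSet u)) (hAmem : ∀ w, H.Adj u w →
      A w ∈ availableColors (H.deleteIncidenceSet u) C (fun v => -ε s(u, v)) γ w) :
    IsSignedColoring H ε C (extendStar ε γ u A) := by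
  have hdelete {v w : V} (hv : v ≠ u) (hw : w ≠ u) (h : H.Adj v w) :
      (H.deleteIncidenceSet u).Adj v w := H.deleteIncidenceSet_adj.2 ⟨h, hv, hw⟩
  have hAC {w : V} (hw : H.Adj u w) := (mem_availableColors.1 (hAmem w hw)).1
  refine ⟨fun v w h => ?_, fun v w h => ?_, fun v w x => hγ.eq_of_extendStar_eq hA ?_⟩
  · by_cases hv : v = u
    · subst hv
      rw [extendStar_left]
      exact hAC h
    by_cases hw : w = u
    · subst hw
      rw [extendStar_right ε γ A hv]
      exact hC.neg_mem _ (hC.units_mul_mem _ (hAC h.symm))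
    · rw [extendStar_of_ne ε γ A hv hw]
      exact hγ.mem (hdelete hv hw h)
  · by_cases hv : v = u
    · subst hv
      rw [extendStar_left, extendStar_right ε γ A h.ne', mul_neg, neg_neg, ← mul_assoc,
        ← Units.val_mul, Int.units_mul_self, Units.val_one, one_mul]
    by_cases hw : w = u
    · subst hw
      rw [extendStar_left, extendStar_right ε γ A hv, Sym2.eq_swap]
    · rw [extendStar_of_ne ε γ A hv hw, extendStar_of_ne ε γ A hw hv]
      exact hγ.compat (hdelete hv hw h)
  · intro v w hv hvw
    simpa using (mem_availableColors.1 (hAmem v hv)).2 w hvw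

variable [Finite V]

lemma ncard_neighborSet_deleteIncidenceSet_lt {H : SimpleGraph V} {u w : V} (h : H.Adj u w) :
    ((H.deleteIncidenceSet u).neighborSet w).ncard < (H.neighborSet w).ncard := by
  refine Set.ncard_lt_ncard ((Set.ssubset_iff_of_subset
    fun x hx => H.deleteIncidenceSet_le u hx).2 ⟨u, h.symm, fun hu => ?_⟩) (Set.toFinite _)
  exact (H.deleteIncidenceSet_adj.1 hu).2.2 rfl

lemma ncard_neighborSet_mono {H H' : SimpleGraph V} (h : H ≤ H') (v : V) :
    (H.neighborSet v).ncard ≤ (H'.neighborSet v).ncard :=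
  Set.ncard_le_ncard (fun _ hw => h hw) (Set.toFinite _)

lemma IsSignedColoring.exists_of_deleteIncidenceSet (hC : IsColorSet C) {H : SimpleGraph V} {u : V}
    (hγ : IsSignedColoring (H.deleteIncidenceSet u) ε C γ) (hu : (H.neighborSet u).ncard ≤ #C)
    (hdeg : ∀ w, H.Adj u w → (H.neighborSet w).ncard < #C) :
    ∃ γ, IsSignedColoring H ε C γ := by
  have hfin := (H.neighborSet u).toFinite
  have hdeg' : ∀ w ∈ hfin.toFinset,
      ((H.deleteIncidenceSet u).neighborSet w).ncard + 2 ≤ #C := fun w hw => by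
    have hw := hfin.mem_toFinset.1 hw
    have := ncard_neighborSet_deleteIncidenceSet_lt hw
    have := hdeg w hw
    omega
  obtain ⟨γ, A, hγ, hA, hAmem⟩ := hγ.exists_injOn_availableColors hC (fun v => -ε s(u, v))
    hdeg' (by rwa [← Set.ncard_eq_toFinset_card])
  rw [hfin.coe_toFinset] at hA
  exact ⟨_, hγ.extendStar hC hA fun w hw => hAmem w (hfin.mem_toFinset.2 hw)⟩

lemma exists_adj_forall_adj_ncard_lt {H : SimpleGraph V} {n : ℕ}
    (hdeg : ∀ v, (H.neighborSet v).ncard ≤ n)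
    (hfull : ∀ v w, H.Adj v w → (H.neighborSet v).ncard = n → (H.neighborSet w).ncard < n)
    (hH : H ≠ ⊥) : ∃ u v, H.Adj u v ∧ ∀ w, H.Adj u w → (H.neighborSet w).ncard < n := by
  obtain ⟨v, w, hvw⟩ := ne_bot_iff_exists_adj.1 hH
  by_cases h : ∃ u, (H.neighborSet u).ncard = n
  · obtain ⟨u, hu⟩ := h
    have hpos : 0 < (H.neighborSet u).ncard := by
      rw [hu]
      exact ((Set.ncard_pos (Set.toFinite _)).2 ⟨w, hvw⟩).trans_le (hdeg v)
    obtain ⟨x, hx⟩ := (Set.ncard_pos (Set.toFinite _)).1 hpos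
    exact ⟨u, x, hx, fun y hy => hfull u y hy hu⟩
  · push Not at h
    exact ⟨v, w, hvw, fun x _ => (hdeg x).lt_of_ne (h x)⟩

theorem exists_isSignedColoring (hC : IsColorSet C) (ε : Sym2 V → ℤˣ) (H : SimpleGraph V)
    (hdeg : ∀ v, (H.neighborSet v).ncard ≤ #C)
    (hfull : ∀ v w, H.Adj v w → (H.neighborSet v).ncard = #C → (H.neighborSet w).ncard < #C) :
    ∃ γ, IsSignedColoring H ε C γ := by
  induction H using WellFoundedLT.induction with
  | ind H ih =>
  by_cases hH : H = ⊥
  · subst hH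
    exact ⟨0, fun _ _ h => h.elim, fun _ _ h => h.elim, fun _ _ _ h => h.elim⟩
  obtain ⟨u, v, huv, hu⟩ := exists_adj_forall_adj_ncard_lt hdeg hfull hH
  have hle := H.deleteIncidenceSet_le u
  have hlt : H.deleteIncidenceSet u < H :=
    hle.lt_of_ne fun he => (H.deleteIncidenceSet_adj.1 (he.symm ▸ huv)).2.1 rfl
  have hmono := ncard_neighborSet_mono hle
  obtain ⟨γ, hγ⟩ := ih _ hlt (fun v => (hmono v).trans (hdeg v)) fun v w h hv =>
    (hmono w).trans_lt (hfull v w (hle h) ((hdeg v).antisymm (hv ▸ hmono v)))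
  exact hγ.exists_of_deleteIncidenceSet hC (hdeg u) hu

end Extension

/-! ### Reduction to nonzero colors -/

section Matching

variable {V : Type*} [Finite V] {G : SimpleGraph V}

lemma exists_isMatching_forall_adj (G : SimpleGraph V) :
    ∃ M : G.Subgraph, M.IsMatching ∧ ∀ v w, G.Adj v w → v ∈ M.verts ∨ w ∈ M.verts := by
  obtain ⟨M, hM, hmax⟩ := (Set.toFinite {M : G.Subgraph | M.IsMatching}).exists_maximal
    ⟨⊥, fun _ h => h.elim⟩
  refine ⟨M, hM, fun v w hvw => ?_⟩
  by_contra! hfree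
  have hdisj : Disjoint M.support (G.subgraphOfAdj hvw).support := by
    rw [hM.support_eq_verts, support_subgraphOfAdj, Set.disjoint_right]
    rintro x (rfl | rfl)
    exacts [hfree.1, hfree.2]
  have hle := hmax (hM.sup (Subgraph.IsMatching.subgraphOfAdj hvw) hdisj) le_sup_left
  exact hfree.1 (hle.1 (Or.inr (Or.inl rfl)))

lemma ncard_neighborSet_sdiff_lt {M : G.Subgraph} (hM : M.IsMatching) {v : V} (hv : v ∈ M.verts) :
    ((G \ M.spanningCoe).neighborSet v).ncard < (G.neighborSet v).ncard := by
  obtain ⟨x, hx, -⟩ := hM hv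
  exact Set.ncard_lt_ncard ((Set.ssubset_iff_of_subset fun w hw => hw.1).2
    ⟨x, hx.adj_sub, fun h => h.2 hx⟩) (Set.toFinite _)

end Matching

section ColorSets

/-- The `2 * k` nonzero colors of absolute value at most `k`. -/
noncomputable def nonzeroColors (k : ℕ) : Finset ℤ := (Finset.Icc (-(k : ℤ)) k).erase 0

lemma mem_nonzeroColors {k : ℕ} {x : ℤ} : x ∈ nonzeroColors k ↔ x ≠ 0 ∧ x.natAbs ≤ k := by
  rw [nonzeroColors, Finset.mem_erase, Finset.mem_Icc]
  omega

lemma card_nonzeroColors (k : ℕ) : #(nonzeroColors k) = 2 * k := by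
  rw [nonzeroColors, Finset.card_erase_of_mem (Finset.mem_Icc.2 (by omega)), Int.card_Icc]
  omega

lemma isColorSet_nonzeroColors (k : ℕ) : IsColorSet (nonzeroColors k) where
  zero_notMem h := (mem_nonzeroColors.1 h).1 rfl
  neg_mem x hx := by
    rw [mem_nonzeroColors] at hx ⊢
    omega

lemma Mset_two_mul (k : ℕ) : Mset (2 * k) = nonzeroColors k := by
  ext x
  rw [Finset.mem_coe, mem_nonzeroColors, Mset, Set.mem_ofPred_eq, Nat.odd_iff]
  omega

lemma Mset_two_mul_add_one (k : ℕ) : Mset (2 * k + 1) = ↑(insert 0 (nonzeroColors k)) := by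
  ext x
  rw [Finset.mem_coe, Finset.mem_insert, mem_nonzeroColors, Mset, Set.mem_ofPred_eq, Nat.odd_iff]
  omega

lemma finite_Mset (n : ℕ) : (Mset n).Finite := by
  obtain ⟨k, rfl | rfl⟩ := n.even_or_odd'
  · exact Mset_two_mul k ▸ Finset.finite_toSet _
  · exact Mset_two_mul_add_one k ▸ Finset.finite_toSet _

lemma ncard_Mset (n : ℕ) : (Mset n).ncard = n := by
  obtain ⟨k, rfl | rfl⟩ := n.even_or_odd'
  · rw [Mset_two_mul, Set.ncard_coe_finset, card_nonzeroColors]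
  · rw [Mset_two_mul_add_one, Set.ncard_coe_finset,
      Finset.card_insert_of_notMem (isColorSet_nonzeroColors k).zero_notMem, card_nonzeroColors]

end ColorSets

lemma exists_units_eq_signature {V : Type*} {G : SimpleGraph V} {σ : Sym2 V → ℤ}
    (hσ : ∀ e ∈ G.edgeSet, σ e = 1 ∨ σ e = -1) :
    ∃ ε : Sym2 V → ℤˣ, ∀ v w, G.Adj v w → (ε s(v, w) : ℤ) = σ s(v, w) := by
  classical
  refine ⟨fun e => if h : IsUnit (σ e) then h.unit else 1, fun v w h => ?_⟩
  beta_reduce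
  rw [dif_pos (Int.isUnit_iff.2 (hσ s(v, w) h)), IsUnit.unit_spec]

namespace SColoring

variable {V : Type*} {G : SimpleGraph V} {σ : Sym2 V → ℤ} {n k : ℕ}

lemma Proper.ncard_neighborSet_le {c : SColoring G σ n} (hc : c.Proper) (v : V) :
    (G.neighborSet v).ncard ≤ n := by
  have hinj : Set.InjOn (fun w => c.col v s(v, w)) (G.neighborSet v) := fun w hw x hx he => by
    by_contra hne
    exact hc hw hx hne he
  calc (G.neighborSet v).ncard ≤ (Mset n).ncard :=
        Set.ncard_le_ncard_of_injOn _ (fun w hw => c.mem_colors hw) hinj (finite_Mset n)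
    _ = n := ncard_Mset n

lemma exists_proper_of_fun (g : V → V → ℤ) (hmem : ∀ v w, G.Adj v w → g v w ∈ Mset n)
    (hcompat : ∀ v w, G.Adj v w → g v w = -σ s(v, w) * g w v)
    (hinj : ∀ v w x, G.Adj v w → G.Adj v x → g v w = g v x → w = x) :
    ∃ c : SColoring G σ n, c.Proper := by
  classical
  obtain ⟨col, hcol⟩ : ∃ col : V → Sym2 V → ℤ, ∀ v w, col v s(v, w) = g v w := by
    refine ⟨fun v e => if h : v ∈ e then g v (Sym2.Mem.other h) else 0, fun v w => ?_⟩
    have h : v ∈ s(v, w) := Sym2.mem_mk_left v w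
    beta_reduce
    rw [dif_pos h, Sym2.congr_right.1 (Sym2.other_spec h)]
  have hcol' (v w : V) : col w s(v, w) = g w v := by rw [Sym2.eq_swap, hcol]
  refine ⟨⟨col, fun v w h => ?_, fun v w h => ?_⟩, fun v w x hw hx hne he => hne ?_⟩
  · exact hcol v w ▸ hmem v w h
  · rw [hcol, hcol']
    exact hcompat v w h
  · exact hinj v w x hw hx (by rwa [← hcol, ← hcol])

variable [Finite V]

lemma exists_proper_two_mul_add_one (hσ : ∀ e ∈ G.edgeSet, σ e = 1 ∨ σ e = -1)
    (hdeg : ∀ v, (G.neighborSet v).ncard ≤ 2 * k) :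
    ∃ c : SColoring G σ (2 * k + 1), c.Proper := by
  classical
  obtain ⟨ε, hε⟩ := exists_units_eq_signature hσ
  obtain ⟨M, hM, hcover⟩ := exists_isMatching_forall_adj G
  have hlt {v : V} (hv : v ∈ M.verts) : ((G \ M.spanningCoe).neighborSet v).ncard < 2 * k :=
    (ncard_neighborSet_sdiff_lt hM hv).trans_le (hdeg v)
  obtain ⟨γ, hγ⟩ : ∃ γ, IsSignedColoring (G \ M.spanningCoe) ε (nonzeroColors k) γ := by
    refine exists_isSignedColoring (isColorSet_nonzeroColors k) ε _ ?_ ?_ <;>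
      rw [card_nonzeroColors]
    · exact fun v => (ncard_neighborSet_mono sdiff_le v).trans (hdeg v)
    · exact fun v w h hv =>
        hlt ((hcover v w h.1).resolve_left fun hvM => (hlt hvM).ne hv)
  have hmem {v w : V} (h : G.Adj v w) (hm : ¬ M.Adj v w) : γ v w ∈ nonzeroColors k :=
    hγ.mem ⟨h, hm⟩
  have hne {v w : V} (h : G.Adj v w) (hm : ¬ M.Adj v w) : γ v w ≠ 0 :=
    (isColorSet_nonzeroColors k).ne_zero (hmem h hm)
  refine exists_proper_of_fun (fun v w => if M.Adj v w then 0 else γ v w) (fun v w h => ?_)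
    (fun v w h => ?_) (fun v w x hw hx he => ?_)
  · rw [Mset_two_mul_add_one, Finset.mem_coe, Finset.mem_insert]
    split_ifs with hm
    exacts [Or.inl rfl, Or.inr (hmem h hm)]
  · by_cases hm : M.Adj v w
    · rw [if_pos hm, if_pos hm.symm, mul_zero]
    · rw [if_neg hm, if_neg fun h' => hm h'.symm, ← hε v w h, neg_mul]
      exact hγ.compat ⟨h, hm⟩
  · split_ifs at he with hw' hx' hx'
    · exact hM.eq_of_adj_left hw' hx'
    · exact absurd he.symm (hne hx hx')
    · exact absurd he (hne hw hw')
    · exact hγ.inj ⟨hw, hw'⟩ ⟨hx, hx'⟩ he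

lemma exists_proper_two_mul (hσ : ∀ e ∈ G.edgeSet, σ e = 1 ∨ σ e = -1)
    (hdeg : ∀ v, (G.neighborSet v).ncard < 2 * k) : ∃ c : SColoring G σ (2 * k), c.Proper := by
  obtain ⟨ε, hε⟩ := exists_units_eq_signature hσ
  obtain ⟨γ, hγ⟩ : ∃ γ, IsSignedColoring G ε (nonzeroColors k) γ := by
    refine exists_isSignedColoring (isColorSet_nonzeroColors k) ε G ?_ ?_ <;>
      rw [card_nonzeroColors]
    exacts [fun v => (hdeg v).le, fun v w _ _ => hdeg w]
  refine exists_proper_of_fun γ (fun v w h => ?_) (fun v w h => ?_) fun v w x => @hγ.inj v w x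
  · rw [Mset_two_mul]
    exact hγ.mem h
  · rw [← hε v w h, neg_mul]
    exact hγ.compat h

theorem exists_proper_add_one (hσ : ∀ e ∈ G.edgeSet, σ e = 1 ∨ σ e = -1) {d : ℕ}
    (hdeg : ∀ v, (G.neighborSet v).ncard ≤ d) : ∃ c : SColoring G σ (d + 1), c.Proper := by
  obtain ⟨k, rfl | rfl⟩ := d.even_or_odd'
  · exact exists_proper_two_mul_add_one hσ hdeg
  · exact exists_proper_two_mul (k := k + 1) hσ fun v => Nat.lt_succ_of_le (hdeg v)

end SColoring

/-- **Signed Vizing's Theorem.** For every signed simple graph `Σ = (Γ, σ)` on a finite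
simple graph `Γ`, the chromatic index satisfies `Δ(Σ) ≤ χ'(Σ) ≤ Δ(Σ) + 1`. -/
theorem signed_vizing {V : Type*} [Fintype V] (G : SimpleGraph V) [DecidableRel G.Adj]
    (σ : Sym2 V → ℤ) (hσ : ∀ e ∈ G.edgeSet, σ e = 1 ∨ σ e = -1) :
    G.maxDegree ≤ sInf {n : ℕ | ∃ c : SColoring G σ n, c.Proper} ∧
      ∃ n ≤ G.maxDegree + 1, ∃ c : SColoring G σ n, c.Proper := by
  have hdeg (v : V) : (G.neighborSet v).ncard = G.degree v := by
    rw [← G.card_neighborSet_eq_degree, Set.ncard_eq_toFinset_card', Set.toFinset_card]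
  have hcol : ∃ c : SColoring G σ (G.maxDegree + 1), c.Proper :=
    SColoring.exists_proper_add_one hσ fun v => (hdeg v).trans_le (G.degree_le_maxDegree v)
  refine ⟨le_csInf ⟨_, hcol⟩ ?_, _, le_rfl, hcol⟩
  rintro n ⟨c, hc⟩
  exact G.maxDegree_le_of_forall_degree_le n fun v => hdeg v ▸ hc.ncard_neighborSet_le v
end

section
/- Zero-free Signed Vizing's Theorem: Let Σ = (Γ, σ) be a signed simple graph. Then Δ(Σ) ≤ χ'(Σ), and moreover Σ admits a proper zero-free edge coloring with Δ(Σ)+1 colors if Δ(Σ) is odd, and a proper zero-free edge coloring with Δ(Σ)+2 colors if Δ(Σ) is even. -/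
open SimpleGraph

/-! Let `n > Δ` be even, and color the graph without the edges at a vertex `x` by induction. After
switching, the edges at `x` are negative, so both incidences of such an edge get the same color.
Each neighbor of `x` misses at least two colors; list two of them. If the lists have distinct
representatives, these color the edges at `x`. If not, Hall's theorem gives a set of colors with
positive surplus: more colors than lists meeting it.

Let `T` be the least and `S` the greatest set of maximum surplus. Counting gives a color `α ∉ S`
that lies in at least three lists disjoint from `S`; take any `β ∈ T`. Exchanging `α` with `β`, and
`-α` with `-β`, along the Kempe chain that starts at one of these lists replaces `α` by `β` in that
list and changes at most one other color, at the other end of the chain. Supermodularity of the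
surplus shows that this decreases a potential, unless the second color is critical for its list.
A critical color differs from `α` and `β`, hence is `-α` or `-β`, and each of these is critical
for at most one list. So if all three chains were spoiled, two of them would share the critical
end, and a single chain would have three ends. -/

namespace SignedVizing

open scoped Finset

section Surplus

variable {ι κ : Type*} [DecidableEq κ]

section Move

variable [DecidableEq ι]

/-- Replace the color `a` by `b` in the list at `u`. -/
def move (M : ι → Finset κ) (u : ι) (a b : κ) : ι → Finset κ :=
  Function.update M u (insert b ((M u).erase a))

lemma move_self (M : ι → Finset κ) (u : ι) (a b : κ) :
    move M u a b u = insert b ((M u).erase a) :=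
  Function.update_self ..

lemma move_of_ne {M : ι → Finset κ} {u v : ι} (h : v ≠ u) (a b : κ) :
    move M u a b v = M v :=
  Function.update_of_ne h ..

end Move

variable [Fintype ι]

/-- The indices whose list contains a color from `R`. -/
def meeting (M : ι → Finset κ) (R : Finset κ) : Finset ι := {y | ¬Disjoint (M y) R}

/-- The number of colors in `R` minus the number of lists that meet `R`. By Hall's theorem, the
lists have no system of distinct representatives when some surplus is too large. -/
def surplus (M : ι → Finset κ) (R : Finset κ) : ℤ := #R - #(meeting M R)

variable {M : ι → Finset κ} {R Q : Finset κ} {y u v w : ι}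

lemma mem_meeting : y ∈ meeting M R ↔ ∃ a ∈ M y, a ∈ R := by
  simp [meeting, Finset.not_disjoint_iff]

lemma inter_eq_singleton_iff {A : Finset κ} {p : κ} :
    A ∩ R = {p} ↔ (p ∈ A ∧ p ∈ R) ∧ ∀ a ∈ A, a ∈ R → a = p := by
  simp [Finset.eq_singleton_iff_unique_mem]

lemma meeting_mono (h : R ⊆ Q) : meeting M R ⊆ meeting M Q := fun _ hy =>
  have ⟨a, ha, haR⟩ := mem_meeting.1 hy
  mem_meeting.2 ⟨a, ha, h haR⟩

lemma mem_meeting_of_inter_eq_singleton {p : κ} (h : M y ∩ R = {p}) : y ∈ meeting M R :=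
  mem_meeting.2 ⟨p, (inter_eq_singleton_iff.1 h).1⟩

lemma exists_card_sub_card_lt_surplus {C : Finset κ} (hM : ∀ y, M y ⊆ C)
    (hSDR : ¬∃ f : ι → κ, Function.Injective f ∧ ∀ y, f y ∈ M y) :
    ∃ R ⊆ C, (#C : ℤ) - Fintype.card ι < surplus M R := by
  classical
  rw [← Finset.all_card_le_biUnion_card_iff_exists_injective] at hSDR
  push Not at hSDR
  obtain ⟨s, hs⟩ := hSDR
  have hsC : s.biUnion M ⊆ C := Finset.biUnion_subset.2 fun y _ => hM y
  refine ⟨C \ s.biUnion M, Finset.sdiff_subset, ?_⟩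
  have hsub : meeting M (C \ s.biUnion M) ⊆ sᶜ := by
    intro y hy
    simp only [mem_meeting, Finset.mem_sdiff, Finset.mem_biUnion, Finset.mem_compl] at hy ⊢
    grind
  have hmeet := Finset.card_le_card hsub
  have hcompl := s.card_compl_add_card
  have hsdiff := Finset.card_sdiff_add_card_eq_card hsC
  rw [surplus]
  lia

lemma surplus_add_card_sdiff_le [DecidableEq ι] (R Q : Finset κ) :
    surplus M R + surplus M Q + #((meeting M R ∩ meeting M Q) \ meeting M (R ∩ Q)) ≤
      surplus M (R ∪ Q) + surplus M (R ∩ Q) := by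
  have hcolors := Finset.card_union_add_card_inter R Q
  have hlists := Finset.card_union_add_card_inter (meeting M R) (meeting M Q)
  have hunion : meeting M (R ∪ Q) = meeting M R ∪ meeting M Q := by
    ext y; simp only [mem_meeting, Finset.mem_union]; grind
  have hinter := Finset.card_sdiff_add_card_eq_card
    (Finset.subset_inter (meeting_mono (M := M) Finset.inter_subset_left)
      (meeting_mono Finset.inter_subset_right) : meeting M (R ∩ Q) ⊆ _)
  simp only [surplus, hunion]
  lia

lemma surplus_supermodular (R Q : Finset κ) :
    surplus M R + surplus M Q ≤ surplus M (R ∪ Q) + surplus M (R ∩ Q) := by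
  classical
  have := surplus_add_card_sdiff_le (M := M) R Q
  lia

lemma surplus_supermodular_strict (hR : y ∈ meeting M R) (hQ : y ∈ meeting M Q)
    (hRQ : y ∉ meeting M (R ∩ Q)) :
    surplus M R + surplus M Q < surplus M (R ∪ Q) + surplus M (R ∩ Q) := by
  classical
  have := surplus_add_card_sdiff_le (M := M) R Q
  have : 0 < #((meeting M R ∩ meeting M Q) \ meeting M (R ∩ Q)) :=
    Finset.card_pos.2 ⟨y, by simp [hR, hQ, hRQ]⟩
  lia

lemma surplus_add_card_le_surplus_erase {p : κ} (s : Finset ι) (hp : p ∈ R)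
    (hs : ∀ y ∈ s, M y ∩ R = {p}) : surplus M R + #s ≤ surplus M (R.erase p) + 1 := by
  classical
  have hmeet : meeting M (R.erase p) ⊆ meeting M R \ s := by
    intro y hy
    refine Finset.mem_sdiff.2 ⟨meeting_mono (Finset.erase_subset p R) hy, fun hys => ?_⟩
    obtain ⟨a, ha, haR⟩ := mem_meeting.1 hy
    rw [Finset.mem_erase] at haR
    exact haR.1 ((inter_eq_singleton_iff.1 (hs y hys)).2 a ha haR.2)
  have hsub : s ⊆ meeting M R := fun y hy => mem_meeting_of_inter_eq_singleton (hs y hy)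
  have hcard := Finset.card_le_card hmeet
  have hsdiff := Finset.card_sdiff_add_card_eq_card hsub
  have herase := Finset.card_erase_add_one hp
  simp only [surplus]
  lia

section Move

variable [DecidableEq ι]

lemma surplus_move_le_add_one (u : ι) (a b : κ) (R : Finset κ) :
    surplus (move M u a b) R ≤ surplus M R + 1 := by
  have hsub : meeting M R ⊆ insert u (meeting (move M u a b) R) := by
    intro y hy
    obtain rfl | hyu := eq_or_ne y u
    · exact Finset.mem_insert_self ..
    · rw [mem_meeting, ← move_of_ne (M := M) hyu a b] at hy
      exact Finset.mem_insert_of_mem (mem_meeting.2 hy)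
  have hcard := (Finset.card_le_card hsub).trans (Finset.card_insert_le ..)
  simp only [surplus]
  lia

lemma surplus_move_le {a b : κ} (h : b ∈ R ∨ M u ∩ R ≠ {a}) :
    surplus (move M u a b) R ≤ surplus M R := by
  have hsub : meeting M R ⊆ meeting (move M u a b) R := by
    intro y
    simp only [mem_meeting]
    obtain rfl | hyu := eq_or_ne y u
    · rw [move_self]
      grind
    · rw [move_of_ne hyu]
      exact id
  have hcard := Finset.card_le_card hsub
  simp only [surplus]
  lia

lemma surplus_move_lt {a b : κ} (hb : b ∈ R) (hu : u ∉ meeting M R) :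
    surplus (move M u a b) R < surplus M R := by
  have hsub : insert u (meeting M R) ⊆ meeting (move M u a b) R := by
    refine Finset.insert_subset ?_ fun y hy => ?_
    · exact mem_meeting.2 ⟨b, by simp [move_self], hb⟩
    · have hyu : y ≠ u := fun h => hu (h ▸ hy)
      rwa [mem_meeting, move_of_ne hyu, ← mem_meeting]
  have hcard := Finset.card_le_card hsub
  rw [Finset.card_insert_of_notMem hu] at hcard
  simp only [surplus]
  lia

end Move

/-- The largest value, over the sets `R` of colors in `C`, of a weight that orders `R` first by
its surplus and then by having few colors. -/
def potential (C : Finset κ) (M : ι → Finset κ) : ℕ :=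
  C.powerset.sup fun R => ((#C + 1) * surplus M R - #R).toNat

lemma potential_lt_potential {M' : ι → Finset κ} {C T : Finset κ} (hTC : T ⊆ C)
    (hT : 1 ≤ surplus M T)
    (h : ∀ R ⊆ C, surplus M T ≤ surplus M' R → surplus M' R = surplus M T ∧ #T < #R) :
    potential C M' < potential C M := by
  have hTcard := Finset.card_le_card hTC
  have hpos : 0 < (#C + 1) * surplus M T - #T := by nlinarith [hTcard]
  refine lt_of_lt_of_le ?_ (Finset.le_sup (Finset.mem_powerset.2 hTC))
  rw [potential, Finset.sup_lt_iff (by simpa using hpos)]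
  intro R hR
  rw [Finset.mem_powerset] at hR
  have hRcard := Finset.card_le_card hR
  suffices (#C + 1) * surplus M' R - #R < (#C + 1) * surplus M T - #T by lia
  obtain hRt | hRt := le_or_gt (surplus M T) (surplus M' R)
  · obtain ⟨heq, hlt⟩ := h R hR hRt
    rw [heq]
    lia
  · nlinarith [hRcard]

/-- The maximum `t` of the surplus over the sets of colors in `C`, together with the least
maximizer `T` and the greatest maximizer `S`. -/
structure IsExtremal (C : Finset κ) (M : ι → Finset κ) (t : ℤ) (T S : Finset κ) : Prop where
  le : ∀ R ⊆ C, surplus M R ≤ t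
  least : IsLeast {R | R ⊆ C ∧ t ≤ surplus M R} T
  greatest : IsGreatest {R | R ⊆ C ∧ t ≤ surplus M R} S

lemma exists_isExtremal (C : Finset κ) (M : ι → Finset κ) : ∃ t T S, IsExtremal C M t T S := by
  obtain ⟨R₀, hR₀, hmax⟩ := C.powerset.exists_max_image (surplus M) ⟨∅, by simp⟩
  simp only [Finset.mem_powerset] at hR₀ hmax
  let F : Finset (Finset κ) := {R ∈ C.powerset | surplus M R₀ ≤ surplus M R}
  have hF : ∀ {R}, R ∈ F ↔ R ⊆ C ∧ surplus M R₀ ≤ surplus M R := by simp [F]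
  have hclosed : ∀ R ∈ F, ∀ Q ∈ F, R ∩ Q ∈ F ∧ R ∪ Q ∈ F := by
    intro R hR Q hQ
    rw [hF] at hR hQ
    have hinter := Finset.inter_subset_left.trans hR.1 (a := R ∩ Q)
    have hunion := Finset.union_subset hR.1 hQ.1
    have := hmax _ hinter
    have := hmax _ hunion
    have := surplus_supermodular (M := M) R Q
    exact ⟨hF.2 ⟨hinter, by lia⟩, hF.2 ⟨hunion, by lia⟩⟩
  have hne : F.Nonempty := ⟨R₀, hF.2 ⟨hR₀, le_rfl⟩⟩
  refine ⟨surplus M R₀, F.inf' hne id, F.sup' hne id, hmax, ⟨?_, ?_⟩, ⟨?_, ?_⟩⟩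
  · exact hF.1 (Finset.inf'_mem (F : Set (Finset κ)) (fun R hR Q hQ => (hclosed R hR Q hQ).1)
      _ hne id fun _ => id)
  · exact fun R hR => Finset.inf'_le id (hF.2 hR)
  · exact hF.1 (Finset.sup'_mem (F : Set (Finset κ)) (fun R hR Q hQ => (hclosed R hR Q hQ).2)
      _ hne id fun _ => id)
  · exact fun R hR => Finset.le_sup' id (hF.2 hR)

/-- The indices whose list misses `S` and contains `c`. -/
def starOutside (M : ι → Finset κ) (S : Finset κ) (c : κ) : Finset ι :=
  {y | Disjoint (M y) S ∧ c ∈ M y}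

lemma mem_starOutside {S : Finset κ} {c : κ} :
    y ∈ starOutside M S c ↔ Disjoint (M y) S ∧ c ∈ M y := by
  simp [starOutside]

lemma sum_card_starOutside (M : ι → Finset κ) (S A : Finset κ) :
    ∑ c ∈ A, #(starOutside M S c) = ∑ y with Disjoint (M y) S, #(M y ∩ A) := by
  convert Finset.sum_card_bipartiteAbove_eq_sum_card_bipartiteBelow (s := A)
    (t := {y | Disjoint (M y) S}) (fun c y => c ∈ M y) using 3
  · rw [Finset.bipartiteAbove, Finset.filter_filter, starOutside]
  · rw [Finset.bipartiteBelow, Finset.filter_mem_eq_inter, Finset.inter_comm]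

lemma sum_card_starOutside_add_card_le [DecidableEq ι] {S : Finset κ} (hM : ∀ y, #(M y) ≤ 2)
    (s : Finset ι) (hs : ∀ y ∈ s, Disjoint (M y) S ∧ #(M y ∩ R) = 1) :
    ∑ c ∈ R \ S, #(starOutside M S c) + #s ≤ 2 * #(meeting M (R ∪ S) \ meeting M S) := by
  set Y := meeting M (R ∪ S) \ meeting M S with hY
  have hmemY : ∀ {y}, y ∈ Y ↔ Disjoint (M y) S ∧ ¬Disjoint (M y) R := by
    intro y
    simp only [hY, meeting, Finset.mem_sdiff, Finset.mem_filter_univ, Finset.disjoint_union_right]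
    tauto
  have hsY : s ⊆ Y := fun y hy => hmemY.2 ⟨(hs y hy).1, fun hd => by
    have := (hs y hy).2
    rw [Finset.disjoint_iff_inter_eq_empty.1 hd] at this
    simp at this⟩
  have hrestrict : ∑ y with Disjoint (M y) S, #(M y ∩ (R \ S)) = ∑ y ∈ Y, #(M y ∩ (R \ S)) := by
    refine (Finset.sum_subset (fun y hy => ?_) fun y hy hyY => ?_).symm
    · simpa using (hmemY.1 hy).1
    · have hyR : Disjoint (M y) R := by
        by_contra hd
        exact hyY (hmemY.2 ⟨by simpa using hy, hd⟩)
      rw [Finset.card_eq_zero, ← Finset.disjoint_iff_inter_eq_empty]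
      exact hyR.mono_right Finset.sdiff_subset
  rw [sum_card_starOutside, hrestrict, ← Finset.inter_eq_right.2 hsY, ← Finset.filter_mem_eq_inter,
    Finset.card_filter, ← Finset.sum_add_distrib, mul_comm]
  refine Finset.sum_le_card_nsmul _ _ _ fun y _ => ?_
  have hle : #(M y ∩ (R \ S)) ≤ #(M y ∩ R) :=
    Finset.card_le_card (Finset.inter_subset_inter_left Finset.sdiff_subset)
  have hle2 : #(M y ∩ R) ≤ 2 := (Finset.card_le_card Finset.inter_subset_left).trans (hM y)
  split_ifs with hys
  · have := (hs y hys).2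
    lia
  · lia

namespace IsExtremal

variable {C T S : Finset κ} {t : ℤ} {α β p : κ}

lemma surplus_least (h : IsExtremal C M t T S) : surplus M T = t :=
  (h.le T h.least.1.1).antisymm h.least.1.2

lemma surplus_greatest (h : IsExtremal C M t T S) : surplus M S = t :=
  (h.le S h.greatest.1.1).antisymm h.greatest.1.2

lemma least_subset_greatest (h : IsExtremal C M t T S) : T ⊆ S := h.least.2 h.greatest.1

lemma nonempty_least (h : IsExtremal C M t T S) (ht : 1 ≤ t) : T.Nonempty := by
  rw [← h.surplus_least, surplus] at ht
  exact Finset.card_pos.1 (by lia)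

lemma surplus_lt_of_notMem (h : IsExtremal C M t T S) (hβ : β ∈ T) (hR : R ⊆ C) (hβR : β ∉ R) :
    surplus M R < t := by
  by_contra! hlt
  exact hβR (h.least.2 ⟨hR, hlt⟩ hβ)

lemma surplus_union_lt (h : IsExtremal C M t T S) (hR : R ⊆ C) (hRS : ¬R ⊆ S) :
    surplus M (R ∪ S) < t := by
  by_contra! hlt
  exact hRS (Finset.union_subset_left
    (h.greatest.2 ⟨Finset.union_subset hR h.greatest.1.1, hlt⟩))

lemma two_le_card_starOutside (h : IsExtremal C M t T S) (hp : p ∈ C \ S) :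
    2 ≤ #(starOutside M S p) := by
  classical
  rw [Finset.mem_sdiff] at hp
  have hlt := h.surplus_union_lt (R := {p}) (by simpa using hp.1) (by simpa using hp.2)
  have hsub : meeting M ({p} ∪ S) ⊆ meeting M S ∪ starOutside M S p := by
    intro y
    simp only [mem_meeting, mem_starOutside, Finset.disjoint_left, Finset.mem_union,
      Finset.mem_singleton]
    grind
  have hcard := (Finset.card_le_card hsub).trans (Finset.card_union_le _ _)
  have hS := h.surplus_greatest
  rw [surplus] at hlt hS
  rw [Finset.card_union_of_disjoint (by simpa using hp.2), Finset.card_singleton] at hlt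
  lia

lemma exists_three_le_card_starOutside (h : IsExtremal C M t T S) (hMC : ∀ y, M y ⊆ C)
    (hM2 : ∀ y, #(M y) = 2) (ht : (#C : ℤ) - Fintype.card ι < t) :
    ∃ c ∈ C \ S, 3 ≤ #(starOutside M S c) := by
  by_contra! hcon
  have hstar : ∑ c ∈ C \ S, #(starOutside M S c) ≤ #(C \ S) * 2 :=
    Finset.sum_le_card_nsmul _ _ _ fun c hc => Nat.le_of_lt_succ (hcon c hc)
  have hlists : ∑ y with Disjoint (M y) S, #(M y ∩ (C \ S)) = #{y | Disjoint (M y) S} * 2 := by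
    refine Finset.sum_const_nat fun y hy => ?_
    rw [Finset.inter_eq_left.2 (Finset.subset_sdiff.2 ⟨hMC y, by simpa using hy⟩), hM2]
  rw [sum_card_starOutside, hlists] at hstar
  have hcompl : #{y | Disjoint (M y) S} + #(meeting M S) = Fintype.card ι :=
    Finset.card_filter_add_card_filter_not _
  have hsdiff := Finset.card_sdiff_add_card_eq_card h.greatest.1.1
  have hS := h.surplus_greatest
  rw [surplus] at hS
  lia

lemma two_mul_card_lt_sum_card_starOutside (h : IsExtremal C M t T S) (hR : R ⊆ C \ S)
    (hα : α ∈ R) (hα3 : 3 ≤ #(starOutside M S α)) : 2 * #R < ∑ c ∈ R, #(starOutside M S c) := by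
  rw [mul_comm, ← smul_eq_mul, ← Finset.sum_const]
  exact Finset.sum_lt_sum (fun c hc => h.two_le_card_starOutside (hR hc)) ⟨α, hα, hα3⟩

lemma mem_greatest_of_inter_eq_singleton (h : IsExtremal C M t T S) (hM : ∀ y, #(M y) ≤ 2)
    (hβ : β ∈ T) (hα : α ∉ S) (hα3 : 3 ≤ #(starOutside M S α)) (hu : u ∈ starOutside M S α)
    (hvu : v ≠ u) (hR : R ⊆ C) (hβR : β ∉ R) (hRt : t ≤ surplus M R + 2) (huR : M u ∩ R = {α})
    (hvR : M v ∩ R = {p}) : p ∈ S := by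
  classical
  by_contra hpS
  have hαR : α ∈ R := (inter_eq_singleton_iff.1 huR).1.2
  have hunion := h.surplus_union_lt hR fun hRS => hα (hRS hαR)
  have hinter := h.surplus_lt_of_notMem hβ (R := R ∩ S) (Finset.inter_subset_left.trans hR)
    (by simp [hβR])
  have hsuper := surplus_supermodular (M := M) R S
  have hS := h.surplus_greatest
  have hvS : Disjoint (M v) S := by
    by_contra hvS
    have hvRS : v ∉ meeting M (R ∩ S) := by
      rw [mem_meeting]
      rintro ⟨a, hav, haRS⟩
      rw [Finset.mem_inter] at haRS
      exact hpS ((inter_eq_singleton_iff.1 hvR).2 a hav haRS.1 ▸ haRS.2)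
    have := surplus_supermodular_strict (mem_meeting_of_inter_eq_singleton hvR)
      (by simpa [meeting] using hvS) hvRS
    lia
  have hupper := sum_card_starOutside_add_card_le (R := R) (S := S) hM {v, u} <| by
    simp only [Finset.mem_insert, Finset.mem_singleton]
    rintro y (rfl | rfl)
    · exact ⟨hvS, by rw [hvR, Finset.card_singleton]⟩
    · exact ⟨(mem_starOutside.1 hu).1, by rw [huR, Finset.card_singleton]⟩
  have hlower := h.two_mul_card_lt_sum_card_starOutside (Finset.sdiff_subset_sdiff hR le_rfl)
    (Finset.mem_sdiff.2 ⟨hαR, hα⟩) hα3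
  have hcolors := Finset.card_sdiff_add_card R S
  have hlists := Finset.card_sdiff_add_card_eq_card
    (meeting_mono (M := M) (Finset.subset_union_right (s₁ := R) (s₂ := S)))
  rw [Finset.card_pair hvu] at hupper
  simp only [surplus] at hunion hinter hsuper hS hRt
  lia

/-- The color `p` is critical for the index `v` if it is the only color of the list at `v` in some
set inside `S` of surplus at least `t - 1` that avoids `β`. -/
def Critical (M : ι → Finset κ) (t : ℤ) (S : Finset κ) (β p : κ) (v : ι) : Prop :=
  ∃ R ⊆ S, β ∉ R ∧ t ≤ surplus M R + 1 ∧ M v ∩ R = {p}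

lemma Critical.ne_right {v : ι} (hv : Critical M t S β p v) : p ≠ β := by
  obtain ⟨R, -, hβR, -, hpR⟩ := hv
  rintro rfl
  exact hβR (inter_eq_singleton_iff.1 hpR).1.2

lemma Critical.mem {v : ι} (hv : Critical M t S β p v) : p ∈ S := by
  obtain ⟨R, hRS, -, -, hpR⟩ := hv
  exact hRS (inter_eq_singleton_iff.1 hpR).1.2

lemma critical_unique (h : IsExtremal C M t T S) (hβ : β ∈ T)
    (hv : Critical M t S β p v) (hw : Critical M t S β p w) : v = w := by
  classical
  obtain ⟨R, hR, hβR, hRt, hvR⟩ := hv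
  obtain ⟨Q, hQ, hβQ, hQt, hwQ⟩ := hw
  by_contra hvw
  have hunion := h.surplus_lt_of_notMem hβ ((Finset.union_subset hR hQ).trans h.greatest.1.1)
    (by simp [hβR, hβQ])
  have herase := h.surplus_lt_of_notMem hβ (R := (R ∩ Q).erase p)
    ((Finset.erase_subset p _).trans (Finset.inter_subset_left.trans (hR.trans h.greatest.1.1)))
    (by simp [hβR])
  have hsuper := surplus_supermodular (M := M) R Q
  have hgain : surplus M (R ∩ Q) + #{v, w} ≤ surplus M ((R ∩ Q).erase p) + 1 := by
    rw [inter_eq_singleton_iff] at hvR hwQ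
    refine surplus_add_card_le_surplus_erase _ (by grind) fun y hy => ?_
    rw [inter_eq_singleton_iff]
    grind
  rw [Finset.card_pair hvw] at hgain
  lia

lemma inter_least_ne_singleton (h : IsExtremal C M t T S) (v : ι) (p : κ) :
    M v ∩ T ≠ {p} := by
  intro hvT
  have hp : p ∈ T := (inter_eq_singleton_iff.1 hvT).1.2
  have hgain := surplus_add_card_le_surplus_erase {v} hp (by simpa using hvT)
  rw [h.surplus_least, Finset.card_singleton] at hgain
  have hle : T ⊆ T.erase p :=
    h.least.2 ⟨(Finset.erase_subset p T).trans h.least.1.1, by simpa using hgain⟩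
  exact Finset.notMem_erase p T (hle hp)

lemma card_least_lt_card (h : IsExtremal C M t T S) (hR : R ⊆ C) (hRS : ¬R ⊆ S)
    (hRt : t ≤ surplus M R + 1) : #T < #R := by
  have hunion := h.surplus_union_lt hR hRS
  have hsuper := surplus_supermodular (M := M) R S
  have hS := h.surplus_greatest
  have hT : T ⊆ R ∩ S := h.least.2 ⟨Finset.inter_subset_left.trans hR, by lia⟩
  refine Finset.card_lt_card (hT.trans_ssubset ⟨Finset.inter_subset_left, fun hle => ?_⟩)
  exact hRS (hle.trans Finset.inter_subset_right)

variable [DecidableEq ι]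

lemma surplus_move_lt (h : IsExtremal C M t T S) (hα : α ∉ S) (hβ : β ∈ T)
    (hu : Disjoint (M u) S) (hR : R ⊆ C) : surplus (move M u α β) R < t := by
  have hle := h.le R hR
  obtain hRt | hRt := hle.eq_or_lt
  · have huR : u ∉ meeting M R := by
      simpa [meeting] using hu.mono_right (h.greatest.2 ⟨hR, hRt.ge⟩)
    exact hRt ▸ SignedVizing.surplus_move_lt (h.least.2 ⟨hR, hRt.ge⟩ hβ) huR
  by_cases hmove : β ∈ R ∨ M u ∩ R ≠ {α}
  · exact (surplus_move_le hmove).trans_lt hRt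
  push Not at hmove
  have hαR : α ∈ R := (inter_eq_singleton_iff.1 hmove.2).1.2
  have hunion := h.surplus_union_lt hR fun hRS => hα (hRS hαR)
  have hinter := h.surplus_lt_of_notMem hβ (R := R ∩ S) (Finset.inter_subset_left.trans hR)
    (by simp [hmove.1])
  have hsuper := surplus_supermodular (M := M) R S
  have hS := h.surplus_greatest
  have := surplus_move_le_add_one (M := M) u α β R
  lia

lemma potential_move_lt (h : IsExtremal C M t T S) (ht : 1 ≤ t) (hα : α ∉ S) (hβ : β ∈ T)
    (hu : Disjoint (M u) S) : potential C (move M u α β) < potential C M := by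
  rw [← h.surplus_least] at ht
  refine potential_lt_potential h.least.1.1 ht fun R hR hRt => ?_
  rw [h.surplus_least] at hRt
  exact absurd (h.surplus_move_lt hα hβ hu hR) hRt.not_gt

lemma critical_of_surplus_move (h : IsExtremal C M t T S) (hM : ∀ y, #(M y) ≤ 2)
    (hα : α ∉ S) (hα3 : 3 ≤ #(starOutside M S α)) (hβ : β ∈ T) (hu : u ∈ starOutside M S α)
    (hR : R ⊆ C) (hβR : β ∉ R) (hRt : t ≤ surplus (move M u α β) R + 1)
    (hvR : move M u α β v ∩ R = {p}) : Critical M t S β p v := by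
  have hsuper := surplus_supermodular (M := M) R S
  have hS := h.surplus_greatest
  have hself : v = u → p ∈ M u ∩ R ∧ p ≠ α := by
    rintro rfl
    rw [inter_eq_singleton_iff, move_self] at hvR
    grind
  by_cases huR : M u ∩ R = {α}
  · have hvu : v ≠ u := fun hvu => (hself hvu).2 (by simpa [huR] using (hself hvu).1)
    rw [move_of_ne hvu] at hvR
    have hαR : α ∈ R := (inter_eq_singleton_iff.1 huR).1.2
    have hunion := h.surplus_union_lt hR fun hRS => hα (hRS hαR)
    have := surplus_move_le_add_one (M := M) u α β R
    have hpS := h.mem_greatest_of_inter_eq_singleton hM hβ hα hα3 hu hvu hR hβR (by lia) huR hvR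
    refine ⟨R ∩ S, Finset.inter_subset_right, by simp [hβR], by lia, ?_⟩
    rw [← Finset.inter_assoc, hvR, Finset.singleton_inter_of_mem hpS]
  · have hle := surplus_move_le (b := β) (Or.inr huR)
    have hinter := h.surplus_lt_of_notMem hβ (R := R ∩ S) (Finset.inter_subset_left.trans hR)
      (by simp [hβR])
    have hRS : R ⊆ S := by
      by_contra hRS
      have := h.surplus_union_lt hR hRS
      lia
    have hvu : v ≠ u := fun hvu =>
      have hp := Finset.mem_inter.1 (hself hvu).1
      Finset.disjoint_left.1 (mem_starOutside.1 hu).1 hp.1 (hRS hp.2)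
    rw [move_of_ne hvu] at hvR
    exact ⟨R, hRS, hβR, by lia, hvR⟩

/-- The second move is the one at the other end of a Kempe chain. -/
lemma potential_move_move_lt (h : IsExtremal C M t T S) (ht : 1 ≤ t) (hM : ∀ y, #(M y) ≤ 2)
    (hα : α ∉ S) (hα3 : 3 ≤ #(starOutside M S α)) (hβ : β ∈ T) (hu : u ∈ starOutside M S α) (q : κ)
    (hundo : ¬(v = u ∧ p = β)) (hcrit : ¬Critical M t S β p v) :
    potential C (move (move M u α β) v p q) < potential C M := by
  have huS := (mem_starOutside.1 hu).1
  rw [← h.surplus_least] at ht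
  refine potential_lt_potential h.least.1.1 ht fun R hR hRt => ?_
  rw [h.surplus_least] at hRt ⊢
  have hfirst := h.surplus_move_lt hα hβ huS hR
  have hsecond := surplus_move_le_add_one (M := move M u α β) v p q R
  refine ⟨by lia, ?_⟩
  by_contra! hcard
  have hpR : move M u α β v ∩ R = {p} := by
    by_contra hpR
    have := surplus_move_le (b := q) (Or.inr hpR)
    lia
  by_cases hβR : β ∈ R
  · have hvu : v ≠ u := by
      rintro rfl
      rw [inter_eq_singleton_iff, move_self] at hpR
      exact hundo ⟨rfl, (hpR.2 β (Finset.mem_insert_self ..) hβR).symm⟩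
    rw [move_of_ne hvu] at hpR
    obtain hRS | hRS := em (R ⊆ S)
    · have huR : u ∉ meeting M R := by simpa [meeting] using huS.mono_right hRS
      have hlt := SignedVizing.surplus_move_lt (a := α) hβR huR
      have hTR := Finset.eq_of_subset_of_card_le (h.least.2 ⟨hR, by lia⟩) hcard
      exact h.inter_least_ne_singleton v p (hTR ▸ hpR)
    · have hle := surplus_move_le (M := M) (u := u) (a := α) (Or.inl hβR)
      exact (h.card_least_lt_card hR hRS (by lia)).not_ge hcard
  · exact hcrit (h.critical_of_surplus_move hM hα hα3 hβ hu hR hβR (by lia) hpR)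

end IsExtremal

end Surplus

section Ends

variable {W : Type*} {K : SimpleGraph W}

/-- The vertices of degree at most one: in a graph of maximum degree two, the ends of the paths
that are components. -/
def ends (K : SimpleGraph W) : Set W := {v | (K.neighborSet v).encard ≤ 1}

lemma encard_neighborSet_induce_le (s : Set W) (v : s) :
    ((K.induce s).neighborSet v).encard ≤ (K.neighborSet v).encard := by
  rw [← Subtype.val_injective.encard_image]
  exact Set.encard_le_encard (Set.image_subset_iff.2 fun _ hw => hw)

lemma two_mul_card_le_sum_degrees_add_two [Fintype W] [DecidableRel K.Adj] (hK : K.Connected) :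
    2 * Fintype.card W ≤ ∑ v, K.degree v + 2 := by
  classical
  have hedges := hK.card_vert_le_card_edgeSet_add_one
  rw [Nat.card_eq_fintype_card, Nat.card_eq_fintype_card, ← edgeFinset_card] at hedges
  rw [K.sum_degrees_eq_twice_card_edges]
  lia

lemma encard_ends_le_two_of_preconnected (hK : K.Preconnected)
    (h2 : ∀ v, (K.neighborSet v).encard ≤ 2) : (ends K).encard ≤ 2 := by
  classical
  by_contra! hlt
  obtain ⟨s, hs, hs3⟩ := Set.exists_subset_encard_eq (Order.add_one_le_of_lt hlt)
  lift s to Finset W using Set.finite_of_encard_eq_coe (k := 3) hs3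
  rw [Set.encard_coe_eq_coe_finsetCard] at hs3
  replace hs3 : #s = 3 := by exact_mod_cast hs3
  obtain ⟨r, hsr, hr⟩ := extend_finset_to_connected hK (Finset.card_pos.1 (hs3 ▸ three_pos))
  let H := K.induce (r : Set W)
  have hdegree : ∀ v : (r : Set W), H.degree v + (if (v : W) ∈ s then 1 else 0) ≤ 2 := by
    intro v
    have hv : (H.degree v : ℕ∞) ≤ (K.neighborSet v).encard := by
      rw [← card_neighborFinset_eq_degree, ← Set.encard_coe_eq_coe_finsetCard, coe_neighborFinset]
      exact encard_neighborSet_induce_le _ v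
    split_ifs with hvs
    · exact Nat.add_le_add_right (by exact_mod_cast hv.trans (hs hvs)) 1
    · exact_mod_cast hv.trans (h2 v)
  have hsum := Finset.sum_le_card_nsmul Finset.univ _ 2 fun v _ => hdegree v
  have hends : ∑ v : (r : Set W), (if (v : W) ∈ s then 1 else 0) = #s :=
    (Finset.sum_coe_sort r fun v => if v ∈ s then 1 else 0).trans
      (by simp [Finset.inter_eq_right.2 hsr])
  have hconn : _ ≤ ∑ v, H.degree v + 2 := two_mul_card_le_sum_degrees_add_two hr
  rw [Finset.sum_add_distrib, hends, Finset.card_univ, smul_eq_mul] at hsum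
  lia

lemma encard_supp_inter_ends_le_two (h2 : ∀ v, (K.neighborSet v).encard ≤ 2)
    (D : K.ConnectedComponent) : (D.supp ∩ ends K).encard ≤ 2 := by
  have hD := encard_ends_le_two_of_preconnected D.connected_toSimpleGraph.preconnected
    fun v => (encard_neighborSet_induce_le D.supp v).trans (h2 v)
  rw [← Subtype.val_injective.encard_image] at hD
  refine (Set.encard_le_encard ?_).trans hD
  rintro v ⟨hvD, hv⟩
  exact ⟨⟨v, hvD⟩, (encard_neighborSet_induce_le D.supp ⟨v, hvD⟩).trans hv, rfl⟩

end Ends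

section Kempe

/-- A way of exchanging colors that respects the signs, as needed to recolor a Kempe chain. -/
structure IsColorSwap (n : ℕ) (π : ℤ → ℤ) : Prop where
  involutive : Function.Involutive π
  odd : Function.Odd π
  mapsTo : Set.MapsTo π (Mset n) (Mset n)

lemma neg_mem_Mset {n : ℕ} {a : ℤ} (ha : a ∈ Mset n) : -a ∈ Mset n := by
  simpa [Mset] using ha

lemma zero_notMem_Mset {n : ℕ} (hn : Even n) : (0 : ℤ) ∉ Mset n := fun h =>
  Nat.not_odd_iff_even.2 hn (h.2 rfl)

lemma zeroFree_of_even {V : Type*} {G : SimpleGraph V} {σ : Sym2 V → ℤ} {n : ℕ} (hn : Even n)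
    (c : SColoring G σ n) : c.ZeroFree := fun _ _ h h0 =>
  zero_notMem_Mset hn (h0 ▸ c.mem_colors h)

/-- The color swap that exchanges `α` with `β` and `-α` with `-β`. -/
def pairSwap (α β a : ℤ) : ℤ :=
  if a = α then β else if a = β then α else if a = -α then -β else if a = -β then -α else a

@[simp]
lemma pairSwap_left (α β : ℤ) : pairSwap α β α = β := if_pos rfl

lemma pairSwap_of_ne {α β a : ℤ} (h : a ≠ α ∧ a ≠ β ∧ a ≠ -α ∧ a ≠ -β) : pairSwap α β a = a := by
  simp [pairSwap, h]

lemma isColorSwap_pairSwap {n : ℕ} (hn : Even n) {α β : ℤ} (hα : α ∈ Mset n) (hβ : β ∈ Mset n) :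
    IsColorSwap n (pairSwap α β) where
  involutive a := by
    have hα0 : α ≠ 0 := fun h => zero_notMem_Mset hn (h ▸ hα)
    have hβ0 : β ≠ 0 := fun h => zero_notMem_Mset hn (h ▸ hβ)
    grind [pairSwap]
  odd a := by
    have hα0 : α ≠ 0 := fun h => zero_notMem_Mset hn (h ▸ hα)
    have hβ0 : β ≠ 0 := fun h => zero_notMem_Mset hn (h ▸ hβ)
    grind [pairSwap]
  mapsTo a ha := by
    rw [pairSwap]
    split_ifs
    exacts [hβ, hα, neg_mem_Mset hβ, neg_mem_Mset hα, ha]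

variable {V : Type*} {G : SimpleGraph V} {σ : Sym2 V → ℤ} {n : ℕ} {c : SColoring G σ n}
  {π : ℤ → ℤ}

/-- The components of this graph are the Kempe chains of `c` for the color swap `π`. A node `(v, a)`
stands for the color `a` at `v`; it is joined to the color that replaces it, and to the color at
the other end of the edge that has color `a` at `v`. The two colors at the ends of an edge may
differ, so the second coordinate cannot be dropped. -/
def kempeGraph (c : SColoring G σ n) (π : ℤ → ℤ) : SimpleGraph (V × ℤ) :=
  .fromRel fun x y => (x.1 = y.1 ∧ y.2 = π x.2) ∨
    (G.Adj x.1 y.1 ∧ c.col x.1 s(x.1, y.1) = x.2 ∧ c.col y.1 s(x.1, y.1) = y.2)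

lemma kempeGraph_adj_swap {v : V} {a : ℤ} (ha : a ≠ π a) :
    (kempeGraph c π).Adj (v, a) (v, π a) := by
  simp [kempeGraph, ha]

lemma kempeGraph_adj_of_adj {v w : V} (h : G.Adj v w) :
    (kempeGraph c π).Adj (v, c.col v s(v, w)) (w, c.col w s(v, w)) := by
  simp [kempeGraph, h, h.ne]

lemma kempeGraph_adj_cases (hπ : π.Involutive) {x y : V × ℤ} (h : (kempeGraph c π).Adj x y) :
    y = (x.1, π x.2) ∨
      (G.Adj x.1 y.1 ∧ c.col x.1 s(x.1, y.1) = x.2 ∧ c.col y.1 s(x.1, y.1) = y.2) := by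
  simp only [kempeGraph, fromRel_adj] at h
  obtain ⟨-, (⟨hv, ha⟩ | h) | ⟨hv, ha⟩ | ⟨h, hx, hy⟩⟩ := h
  · exact Or.inl (Prod.ext hv.symm ha)
  · exact Or.inr h
  · exact Or.inl (Prod.ext hv (by rw [ha, hπ]))
  · exact Or.inr ⟨h.symm, Sym2.eq_swap ▸ hy, Sym2.eq_swap ▸ hx⟩

lemma encard_neighborSet_kempeGraph_le_two (hc : c.Proper) (hπ : π.Involutive) (x : V × ℤ) :
    ((kempeGraph c π).neighborSet x).encard ≤ 2 := by
  have hedge : {y : V × ℤ | G.Adj x.1 y.1 ∧ c.col x.1 s(x.1, y.1) = x.2 ∧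
      c.col y.1 s(x.1, y.1) = y.2}.Subsingleton := by
    rintro ⟨v, a⟩ ⟨hv, hva, ha⟩ ⟨w, b⟩ ⟨hw, hwb, hb⟩
    obtain rfl | hvw := eq_or_ne v w
    · exact Prod.ext rfl (ha.symm.trans hb)
    · exact absurd (hva.trans hwb.symm) (hc hv hw hvw)
  refine (Set.encard_le_encard fun y hy => kempeGraph_adj_cases hπ hy).trans
    ((Set.encard_union_le {(x.1, π x.2)} _).trans ?_)
  rw [Set.encard_singleton, ← one_add_one_eq_two]
  exact add_le_add_right (Set.encard_le_one_iff_subsingleton.2 hedge) 1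

lemma mem_ends_kempeGraph_of_absent (hπ : π.Involutive) {x : V × ℤ} (hx : c.Absent x.2 x.1) :
    x ∈ ends (kempeGraph c π) := by
  refine (Set.encard_le_encard fun y hy => ?_).trans (Set.encard_singleton (x.1, π x.2)).le
  exact (kempeGraph_adj_cases hπ hy).resolve_right fun h => hx h.1 h.2.1

lemma encard_supp_absent_le_two (hc : c.Proper) (hπ : π.Involutive)
    (D : (kempeGraph c π).ConnectedComponent) :
    {x ∈ D.supp | c.Absent x.2 x.1}.encard ≤ 2 :=
  (Set.encard_le_encard <|
    Set.inter_subset_inter_right _ fun _ hx => mem_ends_kempeGraph_of_absent hπ hx).trans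
    (encard_supp_inter_ends_le_two (encard_neighborSet_kempeGraph_le_two hc hπ) D)

open Classical in
/-- The color at `v` that replaces `a` when the Kempe chain `D` is recolored. -/
noncomputable def kempeSwap (D : (kempeGraph c π).ConnectedComponent) (v : V) (a : ℤ) : ℤ :=
  if (v, a) ∈ D.supp then π a else a

variable {D : (kempeGraph c π).ConnectedComponent}

lemma kempeSwap_of_mem {v : V} {a : ℤ} (h : (v, a) ∈ D.supp) : kempeSwap D v a = π a := if_pos h

lemma kempeSwap_of_notMem {v : V} {a : ℤ} (h : (v, a) ∉ D.supp) : kempeSwap D v a = a := if_neg h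

lemma mem_supp_swap_iff {v : V} {a : ℤ} : (v, π a) ∈ D.supp ↔ (v, a) ∈ D.supp := by
  obtain ha | ha := eq_or_ne a (π a)
  · rw [← ha]
  · exact (D.mem_supp_congr_adj (kempeGraph_adj_swap ha)).symm

lemma kempeSwap_involutive (hπ : π.Involutive) (v : V) : (kempeSwap D v).Involutive := by
  intro a
  by_cases ha : (v, a) ∈ D.supp
  · rw [kempeSwap_of_mem ha, kempeSwap_of_mem (mem_supp_swap_iff.2 ha), hπ a]
  · rw [kempeSwap_of_notMem ha, kempeSwap_of_notMem ha]

lemma kempeSwap_mem_Mset (hπ : IsColorSwap n π) (v : V) {a : ℤ} (ha : a ∈ Mset n) :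
    kempeSwap D v a ∈ Mset n := by
  rw [kempeSwap]
  split_ifs
  exacts [hπ.mapsTo ha, ha]

/-- The coloring obtained from `c` by exchanging colors along the Kempe chain `D`. -/
noncomputable def recolor (hπ : IsColorSwap n π) (hσ : ∀ e ∈ G.edgeSet, σ e = 1 ∨ σ e = -1)
    (D : (kempeGraph c π).ConnectedComponent) : SColoring G σ n where
  col v e := kempeSwap D v (c.col v e)
  mem_colors _ _ h := kempeSwap_mem_Mset hπ _ (c.mem_colors h)
  compat v w h := by
    have hD := D.mem_supp_congr_adj (kempeGraph_adj_of_adj (c := c) (π := π) h)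
    by_cases hv : (v, c.col v s(v, w)) ∈ D.supp
    · rw [kempeSwap_of_mem hv, kempeSwap_of_mem (hD.1 hv), c.compat h]
      obtain hs | hs := hσ s(v, w) h <;> simp [hs, hπ.odd _]
    · rw [kempeSwap_of_notMem hv, kempeSwap_of_notMem (mt hD.2 hv), c.compat h]

lemma recolor_proper (hπ : IsColorSwap n π) (hσ : ∀ e ∈ G.edgeSet, σ e = 1 ∨ σ e = -1)
    (hc : c.Proper) : (recolor hπ hσ D).Proper := fun v _ _ hw hx hwx h =>
  hc hw hx hwx ((kempeSwap_involutive hπ.involutive v).injective h)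

lemma absent_recolor (hπ : IsColorSwap n π) (hσ : ∀ e ∈ G.edgeSet, σ e = 1 ∨ σ e = -1)
    {v : V} {a : ℤ} (ha : c.Absent a v) : (recolor hπ hσ D).Absent (kempeSwap D v a) v :=
  fun _ hw h => ha hw ((kempeSwap_involutive hπ.involutive v).injective h)

end Kempe

section Colors

/-- The color set `Mset n` as a finset. -/
noncomputable def colors (n : ℕ) : Finset ℤ :=
  if Even n then (Finset.Icc (-(n / 2 : ℤ)) (n / 2)).erase 0
  else Finset.Icc (-(n / 2 : ℤ)) (n / 2)

lemma mem_colors {n : ℕ} {a : ℤ} : a ∈ colors n ↔ a ∈ Mset n := by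
  simp only [colors, Mset, Set.mem_ofPred_eq, ← Nat.not_even_iff_odd]
  split_ifs with hn <;> simp only [Finset.mem_erase, Finset.mem_Icc, hn] <;> grind

lemma card_colors (n : ℕ) : #(colors n) = n := by
  rw [colors]
  split_ifs with hn
  · rw [Finset.card_erase_of_mem (by simp [Int.ediv_nonneg]), Int.card_Icc]
    grind
  · rw [Int.card_Icc]
    grind

variable {V : Type*} {G : SimpleGraph V} {σ : Sym2 V → ℤ} {n : ℕ} {c : SColoring G σ n}

lemma degree_le_of_proper (hc : c.Proper) (v : V) [Fintype (G.neighborSet v)] :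
    G.degree v ≤ n := by
  rw [← card_colors n, ← card_neighborFinset_eq_degree]
  refine Finset.card_le_card_of_injOn (fun w => c.col v s(v, w)) (fun w hw => ?_) ?_
  · rw [Finset.mem_coe, mem_neighborFinset] at hw
    exact mem_colors.2 (c.mem_colors hw)
  · intro w hw x hx hwx
    rw [Finset.mem_coe, mem_neighborFinset] at hw hx
    by_contra hne
    exact hc hw hx hne hwx

open Classical in
lemma le_card_absent_add_degree (c : SColoring G σ n) (v : V) [Fintype (G.neighborSet v)] :
    n ≤ #{a ∈ colors n | c.Absent a v} + G.degree v := by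
  have hpresent : {a ∈ colors n | ¬c.Absent a v} ⊆
      (G.neighborFinset v).image fun w => c.col v s(v, w) := by
    intro a ha
    simpa [SColoring.Absent] using (Finset.mem_filter.1 ha).2
  have hcard := (Finset.card_le_card hpresent).trans Finset.card_image_le
  have hsplit := Finset.card_filter_add_card_filter_not (s := colors n) fun a => c.Absent a v
  rw [card_neighborFinset_eq_degree] at hcard
  rw [card_colors] at hsplit
  lia

end Colors

section Listings

variable {V : Type*} {G : SimpleGraph V} {σ : Sym2 V → ℤ} {n : ℕ} {c : SColoring G σ n}
  {N : Set V} {M : N → Finset ℤ} {π : ℤ → ℤ} {D : (kempeGraph c π).ConnectedComponent}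
  {t : ℤ} {T S : Finset ℤ} {α β : ℤ} {u : N}

/-- A choice, at each vertex of `N`, of two colors that are absent there. -/
structure IsListing (c : SColoring G σ n) (M : N → Finset ℤ) : Prop where
  card : ∀ y, #(M y) = 2
  subset : ∀ y, M y ⊆ colors n
  absent : ∀ y, ∀ a ∈ M y, c.Absent a y

/-- The lists `M` after the Kempe chain `D` is recolored. -/
noncomputable def kempeLists (D : (kempeGraph c π).ConnectedComponent) (M : N → Finset ℤ) (y : N) :
    Finset ℤ :=
  (M y).image (kempeSwap D y)

lemma IsListing.kempeLists (hM : IsListing c M) (hπ : IsColorSwap n π)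
    (hσ : ∀ e ∈ G.edgeSet, σ e = 1 ∨ σ e = -1) (D : (kempeGraph c π).ConnectedComponent) :
    IsListing (recolor hπ hσ D) (kempeLists D M) where
  card y := by
    rw [SignedVizing.kempeLists, Finset.card_image_of_injective _
      (kempeSwap_involutive hπ.involutive _).injective, hM.card]
  subset y := Finset.image_subset_iff.2 fun a ha =>
    mem_colors.2 (kempeSwap_mem_Mset hπ _ (mem_colors.1 (hM.subset y ha)))
  absent y := Finset.forall_mem_image.2 fun a ha => absent_recolor hπ hσ (hM.absent y a ha)

/-- The pairs `(y, a)` such that the color `a` leaves the list at `y` when the Kempe chain `D` is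
recolored. -/
def moved (D : (kempeGraph c π).ConnectedComponent) (M : N → Finset ℤ) : Set (N × ℤ) :=
  {x | x.2 ∈ M x.1 ∧ (↑x.1, x.2) ∈ D.supp ∧ π x.2 ∉ M x.1}

lemma mem_kempeLists (hπ : π.Involutive) {y : N} {b : ℤ} :
    b ∈ kempeLists D M y ↔ b ∈ M y ∧ (y, b) ∉ moved D M ∨ (y, π b) ∈ moved D M := by
  have himage : b ∈ kempeLists D M y ↔ kempeSwap D y b ∈ M y := by
    rw [kempeLists, Finset.mem_image]
    exact ⟨by rintro ⟨a, ha, rfl⟩; rwa [kempeSwap_involutive hπ], fun hb =>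
      ⟨_, hb, kempeSwap_involutive hπ _ b⟩⟩
  simp only [himage, moved, Set.mem_ofPred_eq, mem_supp_swap_iff, hπ b]
  by_cases hb : (↑y, b) ∈ D.supp
  · rw [kempeSwap_of_mem hb]
    tauto
  · rw [kempeSwap_of_notMem hb]
    tauto

lemma encard_moved_le_two (hc : c.Proper) (hM : IsListing c M) (hπ : π.Involutive) :
    (moved D M).encard ≤ 2 := by
  have hinj : Function.Injective (Prod.map Subtype.val id : N × ℤ → V × ℤ) :=
    Subtype.val_injective.prodMap Function.injective_id
  rw [← hinj.encard_image]
  refine (Set.encard_le_encard ?_).trans (encard_supp_absent_le_two hc hπ D)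
  rintro _ ⟨⟨y, a⟩, ⟨ha, haD, -⟩, rfl⟩
  exact ⟨haD, hM.absent y a ha⟩

lemma kempeLists_eq_move [DecidableEq N] (hπ : π.Involutive) (hmoved : moved D M = {(u, α)}) :
    kempeLists D M = move M u α (π α) := by
  ext y b
  have hα := hπ α
  have hb := hπ b
  simp only [mem_kempeLists hπ, hmoved, Set.mem_singleton_iff, Prod.mk.injEq]
  obtain rfl | hy := eq_or_ne y u
  · rw [move_self]
    grind
  · rw [move_of_ne hy]
    grind

lemma kempeLists_eq_move_move [DecidableEq N] (hπ : π.Involutive) {v : N} {p : ℤ}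
    (hmoved : moved D M = {(u, α), (v, p)}) :
    kempeLists D M = move (move M u α (π α)) v p (π p) := by
  have hu : (u, α) ∈ moved D M := by simp [hmoved]
  have hv : (v, p) ∈ moved D M := by simp [hmoved]
  have hundo : v = u → p ≠ π α := by
    rintro rfl rfl
    exact hu.2.2 hv.1
  ext y b
  have hα := hπ α
  have hp := hπ p
  have hb := hπ b
  simp only [mem_kempeLists hπ, hmoved, Set.mem_insert_iff, Set.mem_singleton_iff, Prod.mk.injEq,
    move, Function.update_apply]
  grind

variable [Fintype N]

lemma mem_moved_of_mem_starOutside (h : IsExtremal (colors n) M t T S) (hπα : π α ∈ T)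
    (hu : u ∈ starOutside M S α) (hD : (↑u, α) ∈ D.supp) : (u, α) ∈ moved D M := by
  rw [mem_starOutside, Finset.disjoint_right] at hu
  exact ⟨hu.2, hD, hu.1 (h.least_subset_greatest hπα)⟩

lemma potential_kempeLists_lt (hc : c.Proper) (hM : IsListing c M) (hπ : π.Involutive)
    (h : IsExtremal (colors n) M t T S) (ht : 1 ≤ t) (hα : α ∉ S)
    (hα3 : 3 ≤ #(starOutside M S α)) (hβ : β ∈ T) (hπα : π α = β)
    (hu : u ∈ starOutside M S α) (hD : (↑u, α) ∈ D.supp)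
    (hcrit : ∀ x ∈ moved D M, ¬IsExtremal.Critical M t S β x.2 x.1) :
    potential (colors n) (kempeLists D M) < potential (colors n) M := by
  classical
  subst hπα
  have huD : (u, α) ∈ moved D M := mem_moved_of_mem_starOutside h hβ hu hD
  have hrest : (moved D M \ {(u, α)}).encard ≤ 1 := by
    have htwo := encard_moved_le_two (D := D) hc hM hπ
    rwa [← Set.encard_sdiff_singleton_add_one huD, ← one_add_one_eq_two,
      ENat.add_le_add_iff_right ENat.one_ne_top] at htwo
  have hinsert := Set.insert_sdiff_self_of_mem huD
  obtain hnone | ⟨⟨v, p⟩, hone⟩ := Set.encard_le_one_iff_eq.1 hrest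
  · rw [hnone, insert_empty_eq] at hinsert
    rw [kempeLists_eq_move hπ hinsert.symm]
    exact h.potential_move_lt ht hα hβ (mem_starOutside.1 hu).1
  · rw [hone] at hinsert
    have hvD : (v, p) ∈ moved D M := by simp [← hinsert]
    rw [kempeLists_eq_move_move hπ hinsert.symm]
    refine h.potential_move_move_lt ht (fun y => (hM.card y).le) hα hα3 hβ hu _ ?_ (hcrit _ hvD)
    rintro ⟨rfl, rfl⟩
    exact huD.2.2 hvD.1

lemma not_forall_exists_critical (hc : c.Proper) (hM : IsListing c M)
    (hαβ : (pairSwap α β).Involutive) (h : IsExtremal (colors n) M t T S) (hα : α ∉ S) (hβ : β ∈ T)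
    (hα3 : 3 ≤ #(starOutside M S α)) :
    ¬∀ u ∈ starOutside M S α,
      ∃ x ∈ moved ((kempeGraph c (pairSwap α β)).connectedComponentMk (↑u, α)) M,
        IsExtremal.Critical M t S β x.2 x.1 := by
  classical
  intro hall
  choose! x hx hcrit using hall
  have hmaps : ∀ u ∈ starOutside M S α, (x u).2 ∈ ({-α, -β} : Finset ℤ) := by
    intro u hu
    have hαx : (x u).2 ≠ α := fun hαx => hα (hαx ▸ (hcrit u hu).mem)
    have hβx : (x u).2 ≠ β := (hcrit u hu).ne_right
    by_contra hneg
    rw [Finset.mem_insert, Finset.mem_singleton, not_or] at hneg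
    refine (hx u hu).2.2 ?_
    rw [pairSwap_of_ne ⟨hαx, hβx, hneg⟩]
    exact (hx u hu).1
  obtain ⟨u, hu, w, hw, huw, hcolor⟩ := Finset.exists_ne_map_eq_of_card_lt_of_maps_to
    (Finset.card_le_two.trans_lt hα3) hmaps
  have hxuw : x u = x w :=
    Prod.ext (h.critical_unique hβ (hcrit u hu) (hcolor ▸ hcrit w hw)) hcolor
  set D := (kempeGraph c (pairSwap α β)).connectedComponentMk (↑u, α)
  have hDw : (kempeGraph c (pairSwap α β)).connectedComponentMk (↑w, α) = D :=
    (hx w hw).2.1.symm.trans (hxuw ▸ (hx u hu).2.1)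
  have hαT : pairSwap α β α ∈ T := by rwa [pairSwap_left]
  have hxα : (x u).2 ≠ α := fun hαx => hα (hαx ▸ (hcrit u hu).mem)
  have hthree : ({(u, α), (w, α), x u} : Set (N × ℤ)).encard = 3 :=
    Set.encard_eq_three.2 ⟨_, _, _, by simp [huw], fun hux => hxα (congrArg Prod.snd hux).symm,
      fun hwx => hxα (congrArg Prod.snd hwx).symm, rfl⟩
  have hsub : {(u, α), (w, α), x u} ⊆ moved D M := by
    simp only [Set.insert_subset_iff, Set.singleton_subset_iff]
    exact ⟨mem_moved_of_mem_starOutside h hαT hu rfl, mem_moved_of_mem_starOutside h hαT hw hDw,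
      hx u hu⟩
  have htwo := (Set.encard_le_encard hsub).trans (encard_moved_le_two hc hM hαβ)
  rw [hthree] at htwo
  exact absurd htwo (by decide)

lemma exists_potential_lt (hn : Even n) (hσ : ∀ e ∈ G.edgeSet, σ e = 1 ∨ σ e = -1)
    (hc : c.Proper) (hM : IsListing c M) (hN : Fintype.card N ≤ n)
    (hSDR : ¬∃ f : N → ℤ, Function.Injective f ∧ ∀ y, f y ∈ M y) :
    ∃ (c' : SColoring G σ n) (M' : N → Finset ℤ), c'.Proper ∧ IsListing c' M' ∧
      potential (colors n) M' < potential (colors n) M := by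
  obtain ⟨R, hR, hRN⟩ := exists_card_sub_card_lt_surplus hM.subset hSDR
  obtain ⟨t, T, S, h⟩ := exists_isExtremal (colors n) M
  have hNt := hRN.trans_le (h.le R hR)
  have ht : 1 ≤ t := by
    rw [card_colors] at hNt
    lia
  obtain ⟨α, hα, hα3⟩ := h.exists_three_le_card_starOutside hM.subset hM.card hNt
  obtain ⟨β, hβ⟩ := h.nonempty_least ht
  rw [Finset.mem_sdiff] at hα
  have hπ := isColorSwap_pairSwap hn (mem_colors.1 hα.1) (mem_colors.1 (h.least.1.1 hβ))
  have hgood := not_forall_exists_critical hc hM hπ.involutive h hα.2 hβ hα3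
  push Not at hgood
  obtain ⟨u, hu, hcrit⟩ := hgood
  exact ⟨recolor hπ hσ _, kempeLists _ M, recolor_proper hπ hσ hc, hM.kempeLists hπ hσ _,
    potential_kempeLists_lt hc hM hπ.involutive h ht hα.2 hα3 hβ (pairSwap_left α β) hu rfl
      hcrit⟩

lemma exists_injective_absent (hn : Even n) (hσ : ∀ e ∈ G.edgeSet, σ e = 1 ∨ σ e = -1)
    (hc : c.Proper) (hM : IsListing c M) (hN : Fintype.card N ≤ n) :
    ∃ (c' : SColoring G σ n) (f : N → ℤ), c'.Proper ∧ Function.Injective f ∧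
      ∀ y, f y ∈ Mset n ∧ c'.Absent (f y) y := by
  induction hk : potential (colors n) M using Nat.strong_induction_on generalizing c M with
  | _ k ih =>
    by_cases hSDR : ∃ f : N → ℤ, Function.Injective f ∧ ∀ y, f y ∈ M y
    · obtain ⟨f, hf, hfM⟩ := hSDR
      exact ⟨c, f, hc, hf, fun y => ⟨mem_colors.1 (hM.subset y (hfM y)), hM.absent y _ (hfM y)⟩⟩
    · obtain ⟨c', M', hc', hM', hlt⟩ := exists_potential_lt hn hσ hc hM hN hSDR
      exact ih _ (hk ▸ hlt) hc' hM' rfl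

end Listings

section Extension

variable {V : Type*} {G : SimpleGraph V} {σ : Sym2 V → ℤ} {n : ℕ}

/-- The signature obtained from `σ` by reversing the signs of the edges between `θ = 1` and
`θ = -1`. -/
def switch (θ : V → ℤˣ) (σ : Sym2 V → ℤ) (e : Sym2 V) : ℤ := (e.map θ).mul * σ e

lemma switch_mk (θ : V → ℤˣ) (σ : Sym2 V → ℤ) (v w : V) :
    switch θ σ s(v, w) = θ v * θ w * σ s(v, w) := by
  simp [switch]

lemma switch_eq_one_or (hσ : ∀ e ∈ G.edgeSet, σ e = 1 ∨ σ e = -1) (θ : V → ℤˣ) :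
    ∀ e ∈ G.edgeSet, switch θ σ e = 1 ∨ switch θ σ e = -1 := by
  intro e he
  rw [switch]
  obtain hθ | hθ := Int.units_eq_one_or (e.map θ).mul <;> obtain hs | hs := hσ e he <;>
    simp [hθ, hs]

lemma exists_switch_eq_neg_one (hσ : ∀ e ∈ G.edgeSet, σ e = 1 ∨ σ e = -1) (x : V) :
    ∃ θ : V → ℤˣ, ∀ y, G.Adj x y → switch θ σ s(x, y) = -1 := by
  classical
  refine ⟨fun y => if G.Adj x y ∧ σ s(x, y) = 1 then -1 else 1, fun y hy => ?_⟩
  obtain hs | hs := hσ s(x, y) hy <;> simp [switch_mk, hy, hs]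

lemma exists_proper_of_switch {θ : V → ℤˣ} {c : SColoring G (switch θ σ) n} (hc : c.Proper) :
    ∃ c' : SColoring G σ n, c'.Proper := by
  refine ⟨⟨fun v e => θ v * c.col v e, fun v w h => ?_, fun v w h => ?_⟩,
    fun v w x hw hx hwx h => hc hw hx hwx ?_⟩
  · obtain hθ | hθ := Int.units_eq_one_or (θ v)
    · simpa [hθ] using c.mem_colors h
    · simpa [hθ] using neg_mem_Mset (c.mem_colors h)
  · rw [c.compat h, switch_mk]
    obtain hv | hv := Int.units_eq_one_or (θ v) <;> simp [hv, mul_assoc, mul_left_comm]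
  · simpa using h

lemma degree_deleteIncidenceSet_lt {x y : V} (h : G.Adj x y) [Fintype (G.neighborSet y)]
    [Fintype ((G.deleteIncidenceSet x).neighborSet y)] :
    (G.deleteIncidenceSet x).degree y < G.degree y := by
  simp only [← card_neighborFinset_eq_degree]
  refine Finset.card_lt_card ((Finset.ssubset_iff_of_subset fun w hw => ?_).2 ⟨x, ?_, ?_⟩)
  · simp only [mem_neighborFinset] at hw ⊢
    exact G.deleteIncidenceSet_le x hw
  · simpa using h.symm
  · simp [deleteIncidenceSet_adj]

lemma exists_isListing {N : Set V} (c : SColoring G σ n) [∀ v, Fintype (G.neighborSet v)]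
    (hdeg : ∀ y ∈ N, G.degree y + 2 ≤ n) : ∃ M : N → Finset ℤ, IsListing c M := by
  classical
  have hlist : ∀ y : N, ∃ A ⊆ {a ∈ colors n | c.Absent a y}, #A = 2 := fun y => by
    have habsent := le_card_absent_add_degree c y
    have hy := hdeg y y.2
    exact Finset.exists_subset_card_eq (by lia)
  choose M hM hM2 using hlist
  exact ⟨M, hM2, fun y => (hM y).trans (Finset.filter_subset _ _),
    fun y a ha => (Finset.mem_filter.1 (hM y ha)).2⟩

/-- The color function extending `c` to the edges at `x`: both incidences of the edge `xy` are
colored `f y`, which is compatible with the signature if this edge is negative. -/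
noncomputable def starColor {x : V} (c : SColoring (G.deleteIncidenceSet x) σ n)
    (f : G.neighborSet x → ℤ) (v : V) (e : Sym2 V) : ℤ :=
  open scoped Classical in
  if x ∈ e then Function.extend (fun y : G.neighborSet x => s(x, ↑y)) f 0 e else c.col v e

section starColor

variable {x : V} {c : SColoring (G.deleteIncidenceSet x) σ n} {f : G.neighborSet x → ℤ}

lemma starColor_left {y : V} (h : G.Adj x y) (v : V) : starColor c f v s(x, y) = f ⟨y, h⟩ :=
  (if_pos (Sym2.mem_mk_left x y)).trans <| Function.Injective.extend_apply
    (fun _ _ h => Subtype.ext (Sym2.congr_right.1 h)) f 0 (⟨y, h⟩ : G.neighborSet x)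

lemma starColor_right {y : V} (h : G.Adj y x) (v : V) :
    starColor c f v s(y, x) = f ⟨y, h.symm⟩ :=
  Sym2.eq_swap ▸ starColor_left h.symm v

lemma starColor_of_adj {v w : V} (h : (G.deleteIncidenceSet x).Adj v w) (z : V) :
    starColor c f z s(v, w) = c.col z s(v, w) := by
  rw [deleteIncidenceSet_adj] at h
  exact if_neg (by simp [h.2.1.symm, h.2.2.symm])

lemma exists_proper_of_deleteIncidenceSet (hσ : ∀ y, G.Adj x y → σ s(x, y) = -1)
    (hc : c.Proper) (hf : Function.Injective f)
    (hfc : ∀ y, f y ∈ Mset n ∧ c.Absent (f y) y) : ∃ c' : SColoring G σ n, c'.Proper := by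
  have hcases {v w : V} (h : G.Adj v w) :
      x = v ∨ x = w ∨ (G.deleteIncidenceSet x).Adj v w := by
    rw [deleteIncidenceSet_adj]
    tauto
  refine ⟨⟨starColor c f, fun v w h => ?_, fun v w h => ?_⟩, fun v w z hw hz hwz => ?_⟩
  · obtain rfl | rfl | h' := hcases h
    · exact starColor_left h _ ▸ (hfc _).1
    · exact starColor_right h _ ▸ (hfc _).1
    · exact starColor_of_adj h' v ▸ c.mem_colors h'
  · obtain rfl | rfl | h' := hcases h
    · simp [starColor_left h, hσ w h]
    · rw [starColor_right h, starColor_right h, Sym2.eq_swap, hσ v h.symm, neg_neg, one_mul]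
    · rw [starColor_of_adj h', starColor_of_adj h', c.compat h']
  · dsimp only
    obtain rfl | hxv := eq_or_ne x v
    · rw [starColor_left hw, starColor_left hz]
      exact fun h => hwz (congrArg Subtype.val (hf h))
    obtain rfl | hw' := (hcases hw).resolve_left hxv
    · have hz' := ((hcases hz).resolve_left hxv).resolve_left hwz
      rw [starColor_right hw, starColor_of_adj hz']
      exact ((hfc ⟨v, hw.symm⟩).2 hz').symm
    obtain rfl | hz' := (hcases hz).resolve_left hxv
    · rw [starColor_right hz, starColor_of_adj hw']
      exact (hfc ⟨v, hz.symm⟩).2 hw'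
    · rw [starColor_of_adj hw', starColor_of_adj hz']
      exact hc hw' hz' hwz

end starColor

lemma exists_proper [Fintype V] [hG : DecidableRel G.Adj] (hn : Even n)
    (hσ : ∀ e ∈ G.edgeSet, σ e = 1 ∨ σ e = -1) (hdeg : ∀ v, G.degree v < n) :
    ∃ c : SColoring G σ n, c.Proper := by
  classical
  induction G using WellFoundedLT.induction generalizing σ hG with
  | _ G ih =>
    obtain rfl | hbot := eq_or_ne G ⊥
    · exact ⟨⟨fun _ _ => 0, fun _ _ h => h.elim, fun _ _ h => h.elim⟩, fun _ _ _ h => h.elim⟩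
    obtain ⟨x, y, hxy⟩ := ne_bot_iff_exists_adj.1 hbot
    obtain ⟨θ, hθ⟩ := exists_switch_eq_neg_one hσ x
    have hle := G.deleteIncidenceSet_le x
    have hne : G.deleteIncidenceSet x ≠ G := fun h => by
      rw [← h, deleteIncidenceSet_adj] at hxy
      exact hxy.2.1 rfl
    have hσH : ∀ e ∈ (G.deleteIncidenceSet x).edgeSet, switch θ σ e = 1 ∨ switch θ σ e = -1 :=
      fun e he => switch_eq_one_or hσ θ e (edgeSet_mono hle he)
    obtain ⟨c, hc⟩ := ih (G.deleteIncidenceSet x) (hle.lt_of_ne hne) hσH fun v =>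
      (degree_le_of_le hle).trans_lt (hdeg v)
    obtain ⟨M, hM⟩ := exists_isListing (N := G.neighborSet x) c fun y hy => by
      have := degree_deleteIncidenceSet_lt hy
      have := hdeg y
      lia
    obtain ⟨c', f, hc', hf, hfc⟩ := exists_injective_absent hn hσH hc hM <| by
      rw [card_neighborSet_eq_degree]
      exact (hdeg x).le
    obtain ⟨c'', hc''⟩ := exists_proper_of_deleteIncidenceSet hθ hc' hf hfc
    exact exists_proper_of_switch hc''

end Extension

end SignedVizing

/-- **Zero-free Signed Vizing's Theorem.** `Δ(Σ) ≤ χ'(Σ)`, and `Σ` admits a proper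
zero-free edge coloring with `Δ(Σ)+1` colors if `Δ(Σ)` is odd, and with `Δ(Σ)+2`
colors if `Δ(Σ)` is even. -/
theorem zero_free_signed_vizing {V : Type*} [Fintype V] (G : SimpleGraph V)
    [DecidableRel G.Adj] (σ : Sym2 V → ℤ)
    (hσ : ∀ e ∈ G.edgeSet, σ e = 1 ∨ σ e = -1) :
    G.maxDegree ≤ sInf {n : ℕ | ∃ c : SColoring G σ n, c.Proper} ∧
    (Odd G.maxDegree →
      ∃ c : SColoring G σ (G.maxDegree + 1), c.Proper ∧ c.ZeroFree) ∧
    (Even G.maxDegree →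
      ∃ c : SColoring G σ (G.maxDegree + 2), c.Proper ∧ c.ZeroFree) := by
  have exists_zeroFree {n : ℕ} (hn : Even n) (hlt : G.maxDegree < n) :
      ∃ c : SColoring G σ n, c.Proper ∧ c.ZeroFree := by
    obtain ⟨c, hc⟩ := SignedVizing.exists_proper hn hσ fun v =>
      (G.degree_le_maxDegree v).trans_lt hlt
    exact ⟨c, hc, SignedVizing.zeroFree_of_even hn c⟩
  refine ⟨?_, fun h => exists_zeroFree h.add_one (by lia),
    fun h => exists_zeroFree (h.add even_two) (by lia)⟩
  obtain ⟨c, hc, -⟩ := exists_zeroFree (even_two_mul (G.maxDegree + 1)) (by lia)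
  obtain ⟨c', hc'⟩ := Nat.sInf_mem (s := {n | ∃ c : SColoring G σ n, c.Proper}) ⟨_, c, hc⟩
  exact G.maxDegree_le_of_forall_degree_le _ fun v => SignedVizing.degree_le_of_proper hc' v
end
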